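/- arXiv:1009.3421 — 2 statements merged into one kernel-verified Lean document; each statement's English description precedes it below -/
import Mathlib

section
/- Poincaré inequality for the Gaussian measure: for every smooth compactly supported function f on ℝⁿ, Var_γ(f) := ∫ f² dγ − (∫ f dγ)² ≤ ∫ |∇f|² dγ. -/
open MeasureTheory Real

noncomputable def gaussian (n : ℕ) : Measure (EuclideanSpace ℝ (Fin n)) :=
  (volume : Measure (EuclideanSpace ℝ (Fin n))).withDensity
    (fun x => ENNReal.ofReal ((2 * Real.pi) ^ (-(n : ℝ) / 2) * Real.exp (-‖x‖ ^ 2 / 2)))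

noncomputable def OU (n : ℕ) (t : ℝ) (f : EuclideanSpace ℝ (Fin n) → ℝ)
    (x : EuclideanSpace ℝ (Fin n)) : ℝ :=
  ∫ y, f (Real.exp (-t) • x + Real.sqrt (1 - Real.exp (-2 * t)) • y) ∂(gaussian n)

/-!
Let `X`, `Y` be independent with the centered Gaussian law `μ`. The path
`X_θ = cos θ • X + sin θ • Y` joins `X` to the independent copy `Y`, so `ψ θ = 𝔼[f X * f X_θ]`
decreases from `𝔼[f(X)²]` to `(𝔼[f X])²`, and the variance of `f` is `-∫ ψ'` over `[0, π/2]`.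
Since `μ ⊗ μ` is invariant under rotations, differentiating the invariance at angle `0` gives
Stein's formula `𝔼[f X * L X] = 𝔼[Cov(Df X, L)]`, which turns `-ψ' θ` into
`sin θ * 𝔼[Cov(Df X, Df X_θ)]`. By Cauchy–Schwarz and rotation invariance this is at most
`sin θ * 𝔼[Cov(Df X, Df X)]`, and `∫ sin = 1` over `[0, π/2]`.
-/

open ProbabilityTheory
open scoped RealInnerProductSpace

local notation "rot" => ContinuousLinearMap.rotation

/-- A map has polynomial growth if its norm is bounded everywhere by a multiple of a power of
`1 + ‖x‖`. These maps are integrable with respect to every Gaussian measure. -/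
def HasPolynomialGrowth {E F : Type*} [NormedAddCommGroup E] [NormedAddCommGroup F]
    (f : E → F) : Prop :=
  ∃ (C : ℝ) (k : ℕ), ∀ x, ‖f x‖ ≤ C * (1 + ‖x‖) ^ k

namespace HasPolynomialGrowth

section Basic

variable {E F G H : Type*} [NormedAddCommGroup E] [NormedAddCommGroup F] [NormedAddCommGroup G]
  [NormedAddCommGroup H] {f : E → F} {g : E → G}

lemma of_bounded {C : ℝ} (hC : ∀ x, ‖f x‖ ≤ C) : HasPolynomialGrowth f :=
  ⟨C, 0, fun x ↦ by simpa using hC x⟩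

protected lemma const (c : F) : HasPolynomialGrowth fun _ : E ↦ c :=
  .of_bounded fun _ ↦ le_rfl

lemma of_hasCompactSupport (hf : Continuous f) (hfs : HasCompactSupport f) :
    HasPolynomialGrowth f :=
  let ⟨_, hC⟩ := hf.bounded_above_of_compact_support hfs
  .of_bounded hC

lemma of_norm_le_mul {h : E → H} (hf : HasPolynomialGrowth f) (hg : HasPolynomialGrowth g)
    (hh : ∀ x, ‖h x‖ ≤ ‖f x‖ * ‖g x‖) : HasPolynomialGrowth h := by
  obtain ⟨C, j, hC⟩ := hf
  obtain ⟨D, k, hD⟩ := hg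
  refine ⟨C * D, j + k, fun x ↦ (hh x).trans ?_⟩
  rw [pow_add, mul_mul_mul_comm]
  exact mul_le_mul (hC x) (hD x) (norm_nonneg _) ((norm_nonneg _).trans (hC x))

protected lemma mul {f g : E → ℝ} (hf : HasPolynomialGrowth f) (hg : HasPolynomialGrowth g) :
    HasPolynomialGrowth fun x ↦ f x * g x :=
  hf.of_norm_le_mul hg fun _ ↦ norm_mul_le _ _

lemma exists_nonneg (hf : HasPolynomialGrowth f) :
    ∃ C, 0 ≤ C ∧ ∃ k : ℕ, ∀ x, ‖f x‖ ≤ C * (1 + ‖x‖) ^ k := by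
  obtain ⟨C, k, hC⟩ := hf
  exact ⟨C, (norm_nonneg _).trans (by simpa using hC 0), k, hC⟩

protected lemma add {f' : E → F} (hf : HasPolynomialGrowth f) (hf' : HasPolynomialGrowth f') :
    HasPolynomialGrowth fun x ↦ f x + f' x := by
  obtain ⟨C, hC0, j, hC⟩ := hf.exists_nonneg
  obtain ⟨D, hD0, k, hD⟩ := hf'.exists_nonneg
  refine ⟨C + D, j + k, fun x ↦ (norm_add_le _ _).trans ?_⟩
  have hx : 1 ≤ 1 + ‖x‖ := le_add_of_nonneg_right (norm_nonneg x)
  calc ‖f x‖ + ‖f' x‖ ≤ C * (1 + ‖x‖) ^ j + D * (1 + ‖x‖) ^ k := add_le_add (hC x) (hD x)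
    _ ≤ C * (1 + ‖x‖) ^ (j + k) + D * (1 + ‖x‖) ^ (j + k) := by gcongr <;> omega
    _ = (C + D) * (1 + ‖x‖) ^ (j + k) := by ring

protected lemma neg (hf : HasPolynomialGrowth f) : HasPolynomialGrowth fun x ↦ -f x := by
  simpa only [HasPolynomialGrowth, norm_neg] using hf

protected lemma sub {f' : E → F} (hf : HasPolynomialGrowth f) (hf' : HasPolynomialGrowth f') :
    HasPolynomialGrowth fun x ↦ f x - f' x := by
  simpa only [sub_eq_add_neg] using hf.add hf'.neg

protected lemma comp {g : F → G} (hg : HasPolynomialGrowth g) (hf : HasPolynomialGrowth f) :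
    HasPolynomialGrowth fun x ↦ g (f x) := by
  obtain ⟨C, j, hC⟩ := hf
  obtain ⟨D, hD0, k, hD⟩ := hg.exists_nonneg
  refine ⟨D * (1 + C) ^ k, j * k, fun x ↦ ?_⟩
  have hx : 1 ≤ (1 + ‖x‖) ^ j := one_le_pow₀ (le_add_of_nonneg_right (norm_nonneg x))
  calc ‖g (f x)‖ ≤ D * (1 + ‖f x‖) ^ k := hD _
    _ ≤ D * ((1 + ‖x‖) ^ j + C * (1 + ‖x‖) ^ j) ^ k := by gcongr; exact hC x
    _ = D * (1 + C) ^ k * (1 + ‖x‖) ^ (j * k) := by rw [← one_add_mul, mul_pow, pow_mul]; ring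

end Basic

section NormedSpace

variable {E F G : Type*} [NormedAddCommGroup E] [NormedAddCommGroup F] [NormedSpace ℝ F]
  [NormedAddCommGroup G] [NormedSpace ℝ G]

lemma clm_apply {L : E → F →L[ℝ] G} {v : E → F} (hL : HasPolynomialGrowth L)
    (hv : HasPolynomialGrowth v) : HasPolynomialGrowth fun x ↦ L x (v x) :=
  hL.of_norm_le_mul hv fun x ↦ (L x).le_opNorm (v x)

lemma of_clm (L : F →L[ℝ] G) : HasPolynomialGrowth L := by
  refine ⟨‖L‖, 1, fun x ↦ (L.le_opNorm x).trans ?_⟩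
  gcongr
  simp

lemma const_smul {f : E → F} (c : ℝ) (hf : HasPolynomialGrowth f) :
    HasPolynomialGrowth fun x ↦ c • f x :=
  (of_clm (c • ContinuousLinearMap.id ℝ F)).comp hf

lemma bilinear_apply {H : Type*} [NormedAddCommGroup H] [NormedSpace ℝ H]
    (B : F →L[ℝ] G →L[ℝ] H) {a : E → F} {b : E → G} (ha : HasPolynomialGrowth a)
    (hb : HasPolynomialGrowth b) : HasPolynomialGrowth fun x ↦ B (a x) (b x) :=
  ((of_clm B).comp ha).clm_apply hb

variable [NormedSpace ℝ E]

protected lemma id : HasPolynomialGrowth fun x : E ↦ x := of_clm (.id ℝ E)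

protected lemma fst : HasPolynomialGrowth (Prod.fst : E × F → E) := of_clm (.fst ℝ E F)

protected lemma snd : HasPolynomialGrowth (Prod.snd : E × F → F) := of_clm (.snd ℝ E F)

lemma rotation_fst (θ : ℝ) : HasPolynomialGrowth fun p : E × E ↦ (rot θ p).1 :=
  of_clm (.fst ℝ E E ∘L rot θ)

lemma of_fderiv {f : E → F} (hf : Differentiable ℝ f)
    (hf' : HasPolynomialGrowth (fderiv ℝ f)) : HasPolynomialGrowth f := by
  obtain ⟨C, hC0, k, hC⟩ := hf'.exists_nonneg
  refine ⟨‖f 0‖ + C, k + 1, fun x ↦ ?_⟩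
  have hderiv : ∀ y ∈ Metric.closedBall (0 : E) ‖x‖, ‖fderiv ℝ f y‖ ≤ C * (1 + ‖x‖) ^ k := by
    intro y hy
    refine (hC y).trans ?_
    gcongr
    exact mem_closedBall_zero_iff.1 hy
  have hmean : ‖f x - f 0‖ ≤ C * (1 + ‖x‖) ^ k * ‖x - 0‖ :=
    (convex_closedBall 0 ‖x‖).norm_image_sub_le_of_norm_fderiv_le (fun y _ ↦ hf y) hderiv
      (by simp) (by simp)
  have hx : 1 ≤ (1 + ‖x‖) ^ (k + 1) := one_le_pow₀ (le_add_of_nonneg_right (norm_nonneg x))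
  calc ‖f x‖ ≤ ‖f 0‖ + ‖f x - f 0‖ := norm_le_norm_add_norm_sub' _ _
    _ ≤ ‖f 0‖ * (1 + ‖x‖) ^ (k + 1) + C * (1 + ‖x‖) ^ k * (1 + ‖x‖) := by
      refine add_le_add (le_mul_of_one_le_right (norm_nonneg _) hx) (hmean.trans ?_)
      gcongr
      simp
    _ = (‖f 0‖ + C) * (1 + ‖x‖) ^ (k + 1) := by ring

end NormedSpace

section Gaussian

variable {E : Type*} [NormedAddCommGroup E] [NormedSpace ℝ E] [CompleteSpace E]
  [SecondCountableTopology E] [MeasurableSpace E] [BorelSpace E] {μ : Measure E} [IsGaussian μ]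

lemma integrable_one_add_norm_pow (μ : Measure E) [IsGaussian μ] (k : ℕ) :
    Integrable (fun x ↦ (1 + ‖x‖) ^ k) μ := by
  have hid : MemLp (id : E → E) k μ := IsGaussian.memLp_id μ k (ENNReal.natCast_ne_top k)
  have h : MemLp (fun x : E ↦ 1 + ‖x‖) k μ := (memLp_const (1 : ℝ)).add hid.norm
  have hpow := h.integrable_norm_pow'
  have habs (x : E) : ‖1 + ‖x‖‖ = 1 + ‖x‖ := norm_of_nonneg (by positivity)
  simpa only [habs] using hpow

lemma integrable {F : Type*} [NormedAddCommGroup F] {f : E → F}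
    (hf : HasPolynomialGrowth f) (hfm : AEStronglyMeasurable f μ) : Integrable f μ := by
  obtain ⟨C, k, hC⟩ := hf
  exact ((integrable_one_add_norm_pow μ k).const_mul C).mono' hfm (.of_forall hC)

lemma memLp_two {f : E → ℝ} (hf : HasPolynomialGrowth f) (hfm : AEStronglyMeasurable f μ) :
    MemLp f 2 μ := by
  rw [memLp_two_iff_integrable_sq hfm]
  simpa only [sq] using (hf.mul hf).integrable (by fun_prop)

end Gaussian

end HasPolynomialGrowth

section Rotation

variable {E : Type*} [NormedAddCommGroup E] [NormedSpace ℝ E]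

lemma norm_rotation_apply_le (θ : ℝ) (p : E × E) : ‖rot θ p‖ ≤ 2 * ‖p‖ := by
  have hsmul {c : ℝ} (hc : |c| ≤ 1) {x : E} (hx : ‖x‖ ≤ ‖p‖) : ‖c • x‖ ≤ ‖p‖ := by
    rw [norm_smul]
    exact (mul_le_of_le_one_left (norm_nonneg x) hc).trans hx
  have hcos := abs_cos_le_one θ
  have hsin := abs_sin_le_one θ
  have hneg_sin : |-sin θ| ≤ 1 := by rwa [abs_neg]
  rw [ContinuousLinearMap.rotation_apply, two_mul]
  exact max_le
    (norm_add_le_of_le (hsmul hcos (norm_fst_le p)) (hsmul hsin (norm_snd_le p)))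
    (norm_add_le_of_le (hsmul hneg_sin (norm_fst_le p)) (hsmul hcos (norm_snd_le p)))

lemma hasDerivAt_rotation_apply (p : E × E) (θ : ℝ) :
    HasDerivAt (fun θ ↦ rot θ p) ((rot θ p).2, -(rot θ p).1) θ := by
  have hcos (x : E) := (hasDerivAt_cos θ).smul_const x
  have hsin (x : E) := (hasDerivAt_sin θ).smul_const x
  convert ((hcos p.1).add (hsin p.2)).prodMk ((hsin p.1).neg.add (hcos p.2)) using 1
  · ext θ <;> simp [ContinuousLinearMap.rotation_apply]
  · simp only [ContinuousLinearMap.rotation_apply, Prod.mk.injEq, true_and]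
    module

lemma rotation_neg_rotation_apply (θ : ℝ) (p : E × E) : rot (-θ) (rot θ p) = p := by
  have hone (x : E) : x = (cos θ ^ 2 + sin θ ^ 2) • x := by rw [cos_sq_add_sin_sq, one_smul]
  simp only [ContinuousLinearMap.rotation_apply, cos_neg, sin_neg]
  ext
  · conv_rhs => rw [hone p.1]
    module
  · conv_rhs => rw [hone p.2]
    module

variable [CompleteSpace E] [SecondCountableTopology E] [MeasurableSpace E] [BorelSpace E]

lemma hasDerivAt_integral_mul_comp_rotation {ν : Measure (E × E)} [IsGaussian ν]
    {w G : E × E → ℝ} {G' : E × E → E × E →L[ℝ] ℝ} (hw : Continuous w)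
    (hw_growth : HasPolynomialGrowth w) (hG : ∀ p, HasFDerivAt G (G' p) p)
    (hG_growth : HasPolynomialGrowth G) (hG' : Continuous fun p ↦ G' p (p.2, -p.1))
    (hG'_growth : HasPolynomialGrowth fun p ↦ G' p (p.2, -p.1)) (θ : ℝ) :
    HasDerivAt (fun θ ↦ ∫ p, w p * G (rot θ p) ∂ν)
      (∫ p, w p * G' (rot θ p) ((rot θ p).2, -(rot θ p).1) ∂ν) θ := by
  have hGc : Continuous G := continuous_iff_continuousAt.2 fun p ↦ (hG p).continuousAt
  have hint : Integrable (fun p ↦ w p * G (rot θ p)) ν :=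
    (hw_growth.mul (hG_growth.comp (.of_clm (rot θ)))).integrable (by fun_prop)
  have hG'm (θ : ℝ) : Continuous fun p : E × E ↦
      G' (rot θ p) ((rot θ p).2, -(rot θ p).1) :=
    hG'.comp (rot θ).continuous
  obtain ⟨C, k, hC⟩ := hw_growth
  obtain ⟨D, hD0, l, hD⟩ := hG'_growth.exists_nonneg
  have hbound (p : E × E) (θ : ℝ) :
      ‖w p * G' (rot θ p) ((rot θ p).2, -(rot θ p).1)‖
        ≤ C * D * 2 ^ l * (1 + ‖p‖) ^ (k + l) := by
    have hrot : 1 + ‖rot θ p‖ ≤ 2 * (1 + ‖p‖) := by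
      linarith [norm_rotation_apply_le θ p]
    calc _ = ‖w p‖ * ‖G' (rot θ p) ((rot θ p).2, -(rot θ p).1)‖ := norm_mul _ _
      _ ≤ C * (1 + ‖p‖) ^ k * (D * (1 + ‖rot θ p‖) ^ l) :=
        mul_le_mul (hC p) (hD _) (norm_nonneg _) ((norm_nonneg _).trans (hC p))
      _ ≤ C * (1 + ‖p‖) ^ k * (D * (2 * (1 + ‖p‖)) ^ l) := by
        refine mul_le_mul_of_nonneg_left ?_ ((norm_nonneg _).trans (hC p))
        gcongr
      _ = C * D * 2 ^ l * (1 + ‖p‖) ^ (k + l) := by rw [mul_pow, pow_add]; ring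
  refine (hasDerivAt_integral_of_dominated_loc_of_deriv_le (𝕜 := ℝ) Filter.univ_mem
    (.of_forall fun θ : ℝ ↦ (hw.mul (hGc.comp (rot θ).continuous)).aestronglyMeasurable) hint
    (hw.mul (hG'm θ)).aestronglyMeasurable (.of_forall fun p θ _ ↦ hbound p θ)
    ((HasPolynomialGrowth.integrable_one_add_norm_pow ν (k + l)).const_mul _)
    (.of_forall fun p θ _ ↦ ?_)).2
  exact ((hG _).comp_hasDerivAt θ (hasDerivAt_rotation_apply p θ)).const_mul (w p)

variable {μ : Measure E} [IsGaussian μ]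

lemma integral_comp_rotation (hμ : μ[id] = 0) {G : E × E → ℝ} (hG : Continuous G) (θ : ℝ) :
    ∫ p, G (rot θ p) ∂(μ.prod μ) = ∫ p, G p ∂(μ.prod μ) := by
  conv_rhs => rw [← IsGaussian.map_rotation_eq_self hμ θ]
  exact (integral_map (rot θ).continuous.aemeasurable hG.aestronglyMeasurable).symm

lemma integral_hasFDerivAt_rotation_eq_zero (hμ : μ[id] = 0) {G : E × E → ℝ}
    {G' : E × E → E × E →L[ℝ] ℝ} (hG : ∀ p, HasFDerivAt G (G' p) p)
    (hG_growth : HasPolynomialGrowth G) (hG' : Continuous fun p ↦ G' p (p.2, -p.1))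
    (hG'_growth : HasPolynomialGrowth fun p ↦ G' p (p.2, -p.1)) :
    ∫ p, G' p (p.2, -p.1) ∂(μ.prod μ) = 0 := by
  have hGc : Continuous G := continuous_iff_continuousAt.2 fun p ↦ (hG p).continuousAt
  have hderiv := hasDerivAt_integral_mul_comp_rotation (ν := μ.prod μ) (w := fun _ ↦ 1)
    continuous_const (.const 1) hG hG_growth hG' hG'_growth 0
  simp only [one_mul, integral_comp_rotation hμ hGc, integral_comp_rotation hμ hG'] at hderiv
  exact hderiv.unique (hasDerivAt_const 0 _)

end Rotation

section Centered

variable {E : Type*} [NormedAddCommGroup E] [NormedSpace ℝ E] [CompleteSpace E]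
  [SecondCountableTopology E] [MeasurableSpace E] [BorelSpace E] {μ : Measure E} [IsGaussian μ]
  {f : E → ℝ}

lemma integral_mul_dual_eq_integral_covarianceBilinDual (hμ : μ[id] = 0)
    (hf : ContDiff ℝ 1 f) (hf' : HasPolynomialGrowth (fderiv ℝ f)) (L : StrongDual ℝ E) :
    ∫ x, f x * L x ∂μ = ∫ x, covarianceBilinDual μ (fderiv ℝ f x) L ∂μ := by
  have hfd := hf.differentiable one_ne_zero
  have hf_growth := hf'.of_fderiv hfd
  have hL : HasPolynomialGrowth L := .of_clm L
  have hdiag_cont : Continuous fun p : E × E ↦ f p.1 * L p.1 := by fun_prop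
  have hcross_cont : Continuous fun p : E × E ↦ fderiv ℝ f p.1 p.2 * L p.2 := by fun_prop
  have hdiag : HasPolynomialGrowth fun p : E × E ↦ f p.1 * L p.1 :=
    (hf_growth.comp .fst).mul (hL.comp .fst)
  have hcross : HasPolynomialGrowth fun p : E × E ↦ fderiv ℝ f p.1 p.2 * L p.2 :=
    ((hf'.comp .fst).clm_apply .snd).mul (hL.comp .snd)
  have hderiv (p : E × E) : HasFDerivAt (fun p : E × E ↦ f p.1 * L p.2)
      (f p.1 • L ∘L .snd ℝ E E + L p.2 • fderiv ℝ f p.1 ∘L .fst ℝ E E) p :=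
    ((hfd p.1).hasFDerivAt.comp p hasFDerivAt_fst).mul
      (L.hasFDerivAt.comp p hasFDerivAt_snd)
  have hG' (p : E × E) : (f p.1 • L ∘L .snd ℝ E E + L p.2 • fderiv ℝ f p.1 ∘L .fst ℝ E E)
      (p.2, -p.1) = fderiv ℝ f p.1 p.2 * L p.2 - f p.1 * L p.1 := by
    simp only [add_apply, smul_apply, ContinuousLinearMap.comp_apply, ContinuousLinearMap.coe_fst',
      ContinuousLinearMap.coe_snd', map_neg, smul_eq_mul]
    ring
  have hzero := integral_hasFDerivAt_rotation_eq_zero hμ hderiv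
    ((hf_growth.comp .fst).mul (hL.comp .snd))
    (by simp only [hG']; exact hcross_cont.sub hdiag_cont)
    (by simp only [hG']; exact hcross.sub hdiag)
  simp only [hG'] at hzero
  rw [integral_sub (hcross.integrable hcross_cont.aestronglyMeasurable)
    (hdiag.integrable hdiag_cont.aestronglyMeasurable), integral_fun_fst (fun x ↦ f x * L x),
    integral_prod _ (hcross.integrable hcross_cont.aestronglyMeasurable)] at hzero
  simp only [covarianceBilinDual_apply' IsGaussian.memLp_two_id, hμ, sub_zero]
  rw [probReal_univ, one_smul] at hzero
  linarith

lemma integral_comp_add_smul_mul_dual (hμ : μ[id] = 0) (hf : ContDiff ℝ 1 f)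
    (hf' : HasPolynomialGrowth (fderiv ℝ f)) (v : E) (c : ℝ) (L : StrongDual ℝ E) :
    ∫ y, f (v + c • y) * L y ∂μ
      = c * ∫ y, covarianceBilinDual μ (fderiv ℝ f (v + c • y)) L ∂μ := by
  have hfderiv (y : E) : fderiv ℝ (fun y ↦ f (v + c • y)) y = c • fderiv ℝ f (v + c • y) := by
    rw [fderiv_comp_smul (f := fun z ↦ f (v + z)), fderiv_comp_add_left]
  have hgrowth : HasPolynomialGrowth (fderiv ℝ fun y ↦ f (v + c • y)) := by
    rw [funext hfderiv]
    have haffine : HasPolynomialGrowth fun y : E ↦ v + c • y :=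
      (HasPolynomialGrowth.const v).add (HasPolynomialGrowth.id.const_smul c)
    exact (hf'.comp haffine).const_smul c
  have hstein := integral_mul_dual_eq_integral_covarianceBilinDual hμ
    (f := fun y ↦ f (v + c • y)) (by fun_prop) hgrowth L
  simpa only [hfderiv, map_smul, smul_apply, smul_eq_mul, integral_const_mul] using hstein

lemma integral_comp_rotation_mul_fderiv (hμ : μ[id] = 0) (hf : ContDiff ℝ 1 f)
    (hf' : HasPolynomialGrowth (fderiv ℝ f)) (θ : ℝ) :
    ∫ p, f (rot θ p).1 * fderiv ℝ f p.1 p.2 ∂(μ.prod μ)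
      = sin θ * ∫ p, covarianceBilinDual μ (fderiv ℝ f (rot θ p).1) (fderiv ℝ f p.1)
          ∂(μ.prod μ) := by
  have hfd := hf.differentiable one_ne_zero
  have hleft : Integrable (fun p : E × E ↦ f (rot θ p).1 * fderiv ℝ f p.1 p.2) (μ.prod μ) :=
    (((hf'.of_fderiv hfd).comp (.rotation_fst θ)).mul ((hf'.comp .fst).clm_apply .snd)).integrable
      (by fun_prop)
  have hright : Integrable (fun p : E × E ↦
      covarianceBilinDual μ (fderiv ℝ f (rot θ p).1) (fderiv ℝ f p.1)) (μ.prod μ) :=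
    (HasPolynomialGrowth.bilinear_apply _ (hf'.comp (.rotation_fst θ)) (hf'.comp .fst)).integrable
      (by fun_prop)
  rw [integral_prod _ hleft, integral_prod _ hright, ← integral_const_mul]
  refine integral_congr_ae (.of_forall fun x ↦ ?_)
  simpa only [ContinuousLinearMap.rotation_apply] using
    integral_comp_add_smul_mul_dual hμ hf hf' (cos θ • x) (sin θ) (fderiv ℝ f x)

lemma hasDerivAt_integral_mul_comp_rotation_fst (hμ : μ[id] = 0) (hf : ContDiff ℝ 1 f)
    (hf' : HasPolynomialGrowth (fderiv ℝ f)) (θ : ℝ) :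
    HasDerivAt (fun θ ↦ ∫ p, f p.1 * f (rot θ p).1 ∂(μ.prod μ))
      (-sin θ * ∫ p, covarianceBilinDual μ (fderiv ℝ f (rot (-θ) p).1) (fderiv ℝ f p.1)
        ∂(μ.prod μ)) θ := by
  have hfd := hf.differentiable one_ne_zero
  have hf_growth : HasPolynomialGrowth fun p : E × E ↦ f p.1 := (hf'.of_fderiv hfd).comp .fst
  have hderiv_growth : HasPolynomialGrowth fun p : E × E ↦ fderiv ℝ f p.1 p.2 :=
    (hf'.comp .fst).clm_apply .snd
  have hderiv := hasDerivAt_integral_mul_comp_rotation (ν := μ.prod μ)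
    (w := fun p : E × E ↦ f p.1) (G := fun p : E × E ↦ f p.1)
    (G' := fun p ↦ fderiv ℝ f p.1 ∘L .fst ℝ E E) (by fun_prop) hf_growth
    (fun p ↦ (hfd p.1).hasFDerivAt.comp p hasFDerivAt_fst) hf_growth
    (by simp only [ContinuousLinearMap.comp_apply, ContinuousLinearMap.coe_fst']; fun_prop)
    hderiv_growth θ
  convert hderiv using 1
  rw [← sin_neg, ← integral_comp_rotation_mul_fderiv hμ hf hf' (-θ), ← integral_comp_rotation hμ
    (G := fun p ↦ f (rot (-θ) p).1 * fderiv ℝ f p.1 p.2) (by fun_prop) θ]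
  simp [rotation_neg_rotation_apply]

lemma integral_covarianceBilinDual_rotation_le (hμ : μ[id] = 0) {a : E → StrongDual ℝ E}
    (ha : Continuous a) (ha_growth : HasPolynomialGrowth a) (θ : ℝ) :
    ∫ p, covarianceBilinDual μ (a (rot θ p).1) (a p.1) ∂(μ.prod μ)
      ≤ ∫ x, covarianceBilinDual μ (a x) (a x) ∂μ := by
  have hfst_growth : HasPolynomialGrowth fun p : E × E ↦ a p.1 := ha_growth.comp .fst
  have hrot_growth : HasPolynomialGrowth fun p : E × E ↦ a (rot θ p).1 :=
    ha_growth.comp (.rotation_fst θ)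
  have hmixed : Integrable (fun p : E × E ↦ covarianceBilinDual μ (a (rot θ p).1) (a p.1))
      (μ.prod μ) :=
    (HasPolynomialGrowth.bilinear_apply _ hrot_growth hfst_growth).integrable (by fun_prop)
  have hrotated : Integrable (fun p : E × E ↦
      covarianceBilinDual μ (a (rot θ p).1) (a (rot θ p).1)) (μ.prod μ) :=
    (HasPolynomialGrowth.bilinear_apply _ hrot_growth hrot_growth).integrable (by fun_prop)
  have hplain : Integrable (fun p : E × E ↦ covarianceBilinDual μ (a p.1) (a p.1)) (μ.prod μ) :=
    (HasPolynomialGrowth.bilinear_apply _ hfst_growth hfst_growth).integrable (by fun_prop)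
  have hyoung (L₁ L₂ : StrongDual ℝ E) : covarianceBilinDual μ L₁ L₂
      ≤ (covarianceBilinDual μ L₁ L₁ + covarianceBilinDual μ L₂ L₂) / 2 := by
    have hnonneg := covarianceBilinDual_self_nonneg (μ := μ) (L₁ - L₂)
    simp only [map_sub, sub_apply, covarianceBilinDual_comm L₂ L₁] at hnonneg
    linarith
  have hmarginal : ∫ p : E × E, covarianceBilinDual μ (a p.1) (a p.1) ∂(μ.prod μ)
      = ∫ x, covarianceBilinDual μ (a x) (a x) ∂μ := by
    simpa using integral_fun_fst (μ := μ) (ν := μ) fun x ↦ covarianceBilinDual μ (a x) (a x)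
  calc ∫ p, covarianceBilinDual μ (a (rot θ p).1) (a p.1) ∂(μ.prod μ)
      ≤ ∫ p, (covarianceBilinDual μ (a (rot θ p).1) (a (rot θ p).1)
          + covarianceBilinDual μ (a p.1) (a p.1)) / 2 ∂(μ.prod μ) :=
        integral_mono hmixed ((hrotated.add hplain).div_const 2) fun p ↦ hyoung _ _
    _ = ∫ x, covarianceBilinDual μ (a x) (a x) ∂μ := by
        rw [integral_div, integral_add hrotated hplain, integral_comp_rotation hμ
          (G := fun p ↦ covarianceBilinDual μ (a p.1) (a p.1)) (by fun_prop), hmarginal]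
        ring

lemma variance_le_integral_variance_fderiv_of_integral_eq_zero (hμ : μ[id] = 0)
    (hf : ContDiff ℝ 1 f) (hf' : HasPolynomialGrowth (fderiv ℝ f)) :
    Var[f; μ] ≤ ∫ x, Var[fderiv ℝ f x; μ] ∂μ := by
  set A := ∫ x, Var[fderiv ℝ f x; μ] ∂μ with hA
  let ψ : ℝ → ℝ := fun θ ↦ ∫ p, f p.1 * f (rot θ p).1 ∂(μ.prod μ)
  have hderiv (θ : ℝ) := hasDerivAt_integral_mul_comp_rotation_fst hμ hf hf' θ
  have hmono : MonotoneOn (fun θ ↦ ψ θ - A * cos θ) (Set.Icc 0 (π / 2)) := by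
    have hψ (θ : ℝ) := (hderiv θ).sub ((hasDerivAt_cos θ).const_mul A)
    refine monotoneOn_of_hasDerivWithinAt_nonneg (convex_Icc _ _)
      (fun θ _ ↦ (hψ θ).continuousAt.continuousWithinAt)
      (fun θ _ ↦ (hψ θ).hasDerivWithinAt) fun θ hθ ↦ ?_
    rw [interior_Icc] at hθ
    have hsin := sin_nonneg_of_nonneg_of_le_pi hθ.1.le (by linarith [hθ.2, pi_pos])
    have hle := integral_covarianceBilinDual_rotation_le hμ (hf.continuous_fderiv one_ne_zero)
      hf' (-θ)
    simp only [covarianceBilinDual_self_eq_variance IsGaussian.memLp_two_id] at hle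
    rw [← hA] at hle
    linarith [mul_nonneg hsin (sub_nonneg.2 hle)]
  have hψ_zero : ψ 0 = ∫ x, f x ^ 2 ∂μ := by
    simpa [ψ, ContinuousLinearMap.rotation_apply, sq] using
      integral_fun_fst (μ := μ) (ν := μ) fun x ↦ f x * f x
  have hψ_pi_div_two : ψ (π / 2) = (∫ x, f x ∂μ) ^ 2 := by
    simpa [ψ, ContinuousLinearMap.rotation_apply, sq] using
      integral_prod_mul (μ := μ) (ν := μ) f f
  have hendpoints : ψ 0 - A ≤ ψ (π / 2) := by
    have hle := hmono (Set.left_mem_Icc.2 (by positivity)) (Set.right_mem_Icc.2 (by positivity))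
      (by positivity)
    simpa using hle
  rw [variance_eq_sub ((hf'.of_fderiv (hf.differentiable one_ne_zero)).memLp_two
    hf.continuous.aestronglyMeasurable)]
  simp only [Pi.pow_apply]
  linarith

end Centered

theorem gaussian_poincare_general {E : Type*} [NormedAddCommGroup E] [NormedSpace ℝ E]
    [CompleteSpace E] [SecondCountableTopology E] [MeasurableSpace E] [BorelSpace E]
    {μ : Measure E} [IsGaussian μ] {f : E → ℝ} (hf : ContDiff ℝ 1 f)
    (hf' : HasPolynomialGrowth (fderiv ℝ f)) :
    Var[f; μ] ≤ ∫ x, Var[fderiv ℝ f x; μ] ∂μ := by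
  set m := ∫ x, x ∂μ
  let ν := μ.map fun x ↦ x - m
  have hm : Measurable fun x : E ↦ x - m := by fun_prop
  have hν : ν[id] = 0 := by
    rw [integral_map hm.aemeasurable (by fun_prop)]
    change ∫ x, (x - m) ∂μ = 0
    rw [integral_sub IsGaussian.integrable_fun_id (integrable_const m), integral_const,
      probReal_univ, one_smul, sub_self]
  have hshift (L : StrongDual ℝ E) : Var[L; ν] = Var[L; μ] := by
    rw [variance_map (by fun_prop) hm.aemeasurable]
    simpa [Function.comp_def] using
      variance_sub_const (μ := μ) L.continuous.aestronglyMeasurable (L m)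
  have hfderiv (x : E) : fderiv ℝ (fun x ↦ f (x + m)) x = fderiv ℝ f (x + m) :=
    fderiv_comp_add_right m
  have hgrowth : HasPolynomialGrowth (fderiv ℝ fun x ↦ f (x + m)) := by
    rw [funext hfderiv]
    exact hf'.comp (HasPolynomialGrowth.id.add (.const m))
  have hfc := hf.continuous
  have hcentered := variance_le_integral_variance_fderiv_of_integral_eq_zero hν
    (f := fun x ↦ f (x + m)) (by fun_prop) hgrowth
  simp only [hshift] at hcentered
  rw [variance_map (by fun_prop) hm.aemeasurable,
    (measurableEmbedding_subRight m).integral_map] at hcentered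
  simpa [Function.comp_def, fderiv_comp_add_right] using hcentered

section StdGaussian

variable {E : Type*} [NormedAddCommGroup E] [InnerProductSpace ℝ E] [FiniteDimensional ℝ E]
  [MeasurableSpace E] [BorelSpace E]

lemma integrable_exp_neg_norm_sq_div_two : Integrable fun x : E ↦ exp (-‖x‖ ^ 2 / 2) := by
  have h := (GaussianFourier.integrable_cexp_neg_mul_sq_norm_add (V := E) (b := 1 / 2)
    (by norm_num) 0 0).norm
  refine h.congr (.of_forall fun x ↦ ?_)
  have hexponent : -(1 / 2) * (‖x‖ : ℂ) ^ 2 + 0 * (⟪0, x⟫ : ℝ) = (-‖x‖ ^ 2 / 2 : ℝ) := by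
    push_cast
    ring
  simp only [hexponent, Complex.norm_exp, Complex.ofReal_re]

lemma integral_exp_neg_norm_sq_div_two_mul_cexp_inner (t : E) :
    ∫ x : E, (exp (-‖x‖ ^ 2 / 2) : ℂ) * Complex.exp (⟪x, t⟫ * Complex.I)
      = ((2 * π) ^ (Module.finrank ℝ E / 2 : ℝ) : ℝ) * Complex.exp (-‖t‖ ^ 2 / 2) := by
  have hfourier := GaussianFourier.integral_cexp_neg_mul_sq_norm_add (V := E) (b := 1 / 2)
    (by norm_num) Complex.I t
  convert hfourier using 1
  · refine integral_congr_ae (.of_forall fun x ↦ ?_)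
    simp only [Complex.ofReal_exp, Complex.exp_add, real_inner_comm x t]
    congr 2
    · push_cast; ring
    · ring
  · rw [Complex.ofReal_cpow (by positivity)]
    push_cast
    congr 2
    · ring
    · rw [Complex.I_sq]; ring

lemma stdGaussian_eq_withDensity :
    stdGaussian E = volume.withDensity fun x ↦ ENNReal.ofReal
      ((2 * π) ^ (-(Module.finrank ℝ E : ℝ) / 2) * exp (-‖x‖ ^ 2 / 2)) := by
  set c := (2 * π) ^ (-(Module.finrank ℝ E : ℝ) / 2) with hc
  have hc_mul : c * (2 * π) ^ (Module.finrank ℝ E / 2 : ℝ) = 1 := by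
    rw [hc, ← rpow_add (by positivity), neg_div, neg_add_cancel, rpow_zero]
  have hfinite : IsFiniteMeasure (volume.withDensity fun x : E ↦
      ENNReal.ofReal (c * exp (-‖x‖ ^ 2 / 2))) :=
    isFiniteMeasure_withDensity_ofReal
      (integrable_exp_neg_norm_sq_div_two.const_mul c).hasFiniteIntegral
  refine Measure.ext_of_charFun (funext fun t ↦ ?_)
  rw [charFun_stdGaussian, charFun_apply,
    integral_withDensity_eq_integral_toReal_smul (by fun_prop) (by simp)]
  have hdensity (x : E) : (ENNReal.ofReal (c * exp (-‖x‖ ^ 2 / 2))).toReal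
      = c * exp (-‖x‖ ^ 2 / 2) := ENNReal.toReal_ofReal (by positivity)
  simp only [hdensity, mul_smul, Complex.real_smul, integral_const_mul,
    integral_exp_neg_norm_sq_div_two_mul_cexp_inner]
  rw [← mul_assoc, ← Complex.ofReal_mul, hc_mul, Complex.ofReal_one, one_mul]

end StdGaussian

lemma gaussian_eq_stdGaussian (n : ℕ) : gaussian n = stdGaussian (EuclideanSpace ℝ (Fin n)) := by
  simp only [gaussian, stdGaussian_eq_withDensity, finrank_euclideanSpace_fin]

instance isGaussian_gaussian (n : ℕ) : IsGaussian (gaussian n) := by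
  rw [gaussian_eq_stdGaussian]
  infer_instance

lemma variance_fderiv_gaussian (n : ℕ) (f : EuclideanSpace ℝ (Fin n) → ℝ)
    (x : EuclideanSpace ℝ (Fin n)) : Var[fderiv ℝ f x; gaussian n] = ‖gradient f x‖ ^ 2 := by
  rw [gaussian_eq_stdGaussian, variance_dual_stdGaussian, gradient, LinearIsometryEquiv.norm_map]

theorem gaussian_poincare (n : ℕ) (f : EuclideanSpace ℝ (Fin n) → ℝ)
    (hf : ContDiff ℝ (⊤ : ℕ∞) f) (hfs : HasCompactSupport f) :
    (∫ x, f x ^ 2 ∂(gaussian n)) - (∫ x, f x ∂(gaussian n)) ^ 2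
      ≤ ∫ x, ‖gradient f x‖ ^ 2 ∂(gaussian n) := by
  have hf₁ : ContDiff ℝ 1 f := hf.of_le (by exact_mod_cast le_top)
  have hf' : HasPolynomialGrowth (fderiv ℝ f) :=
    .of_hasCompactSupport (hf₁.continuous_fderiv one_ne_zero) (hfs.fderiv ℝ)
  have hf_memLp : MemLp f 2 (gaussian n) :=
    hf₁.continuous.memLp_of_hasCompactSupport hfs
  have hpoincare := gaussian_poincare_general (μ := gaussian n) hf₁ hf'
  simpa only [variance_eq_sub hf_memLp, Pi.pow_apply, variance_fderiv_gaussian] using hpoincare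
end

section
/- Bakry-Emery theorem: if ψ ∈ C²(ℝⁿ) satisfies Hess(ψ)(x) ≥ ρ Id for all x with ρ > 0 and ∫ e^{-ψ} dx < ∞, then the probability measure dμ_ψ = e^{-ψ} dx / Z_ψ satisfies the logarithmic Sobolev inequality Ent_{μ_ψ}(f) ≤ (1/(2ρ)) ∫ |∇f|²/f dμ_ψ for all smooth positive f. -/
open MeasureTheory Real

noncomputable def hess (n : ℕ) (f : EuclideanSpace ℝ (Fin n) → ℝ)
    (x : EuclideanSpace ℝ (Fin n)) (i j : Fin n) : ℝ :=
  iteratedFDeriv ℝ 2 f x ![EuclideanSpace.single i 1, EuclideanSpace.single j 1]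

/-!
The argument is that of Bobkov and Ledoux. Let `μ` be proportional to `exp (-ψ)` with `ψ` strongly
convex of modulus `ρ`. The strong convexity of `ψ` puts a Gaussian factor into the
Prékopa-Leindler inequality: for `t + s = 1` and `w` above the Hopf-Lax evolution of `g` with
quadratic cost `ρ * t / (2 * s) * ‖h‖ ^ 2`,
`(∫ x, exp (g x / t) ∂μ) ^ t ≤ ∫ x, exp (w x) ∂μ`.
As `s → 0` one may take `w = g + s / (2 * ρ * t) * ‖∇g‖ ^ 2` up to a small error, while the left
side is at least `∫ exp g + s * Ent (exp g)` by the Donsker-Varadhan variational inequality.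
Comparing the terms of first order in `s` gives the logarithmic Sobolev inequality for `exp g`.
This needs `g` bounded with uniformly continuous derivative; a general positive function is
approximated by `χ ^ 2 * f + ε` with `χ` a cutoff function and `ε > 0`.
-/

section PrekopaLeindler

open Set
open scoped ENNReal Pointwise

theorem volume_add_volume_le_volume_add_of_isCompact {K L : Set ℝ} (hK : IsCompact K)
    (hL : IsCompact L) (hK₀ : K.Nonempty) (hL₀ : L.Nonempty) :
    volume K + volume L ≤ volume (K + L) := by
  -- The translates of `K` and `L` meeting only at `sSup K + sInf L` both lie in `K + L`.
  have hdisj : AEDisjoint volume (sInf L +ᵥ K) (sSup K +ᵥ L) := by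
    refine measure_mono_null (t := {sSup K + sInf L}) ?_ (measure_singleton _)
    rintro _ ⟨⟨k, hk, rfl⟩, l, hl, hlk⟩
    have hk_le := le_csSup hK.bddAbove hk
    have hl_ge := csInf_le hL.bddBelow hl
    simp only [vadd_eq_add, mem_singleton_iff] at hlk ⊢
    linarith
  calc volume K + volume L = volume (sInf L +ᵥ K) + volume (sSup K +ᵥ L) := by
        rw [measure_vadd, measure_vadd]
    _ = volume ((sInf L +ᵥ K) ∪ (sSup K +ᵥ L)) :=
        (measure_union₀ (hL.vadd _).measurableSet.nullMeasurableSet hdisj).symm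
    _ ≤ volume (K + L) := by
        refine measure_mono (union_subset ?_ ?_)
        · rintro _ ⟨k, hk, rfl⟩
          exact ⟨k, hk, sInf L, hL.sInf_mem hL₀, add_comm _ _⟩
        · exact fun _ ⟨l, hl, hx⟩ => ⟨sSup K, hK.sSup_mem hK₀, l, hl, hx⟩

theorem volume_add_volume_le_volume_add {A B : Set ℝ} (hA : MeasurableSet A)
    (hB : MeasurableSet B) (hA₀ : A.Nonempty) (hB₀ : B.Nonempty) :
    volume A + volume B ≤ volume (A + B) := by
  obtain ⟨a, ha⟩ := hA₀
  obtain ⟨b, hb⟩ := hB₀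
  rw [hA.measure_eq_iSup_isCompact, hB.measure_eq_iSup_isCompact]
  simp only [iSup_and']
  refine ENNReal.biSup_add_biSup_le' (f := volume) (g := volume)
    ⟨∅, empty_subset _, isCompact_empty⟩ ⟨∅, empty_subset _, isCompact_empty⟩ ?_
  rintro K ⟨hKA, hK⟩ L ⟨hLB, hL⟩
  calc volume K + volume L ≤ volume (insert a K) + volume (insert b L) :=
        add_le_add (measure_mono (subset_insert _ _)) (measure_mono (subset_insert _ _))
    _ ≤ volume (insert a K + insert b L) :=
        volume_add_volume_le_volume_add_of_isCompact (hK.insert a) (hL.insert b)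
          (insert_nonempty _ _) (insert_nonempty _ _)
    _ ≤ volume (A + B) :=
        measure_mono (add_subset_add (insert_subset ha hKA) (insert_subset hb hLB))

theorem ofReal_mul_volume_add_le_volume_smul_add_smul {t s : ℝ} (ht : 0 < t) (hs : 0 < s)
    {A B : Set ℝ} (hA : MeasurableSet A) (hB : MeasurableSet B) (hA₀ : A.Nonempty)
    (hB₀ : B.Nonempty) :
    ENNReal.ofReal t * volume A + ENNReal.ofReal s * volume B ≤ volume (t • A + s • B) := by
  have volume_smul {c : ℝ} (hc : 0 < c) (S : Set ℝ) :
      volume (c • S) = ENNReal.ofReal c * volume S := by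
    rw [Measure.addHaar_smul, Module.finrank_self, pow_one, abs_of_pos hc]
  rw [← volume_smul ht, ← volume_smul hs]
  exact volume_add_volume_le_volume_add (hA.const_smul₀ t) (hB.const_smul₀ s)
    hA₀.smul_set hB₀.smul_set

theorem lintegral_eq_setLIntegral_Ioo_meas_lt {α : Type*} [MeasurableSpace α] (μ : Measure α)
    {u : α → ℝ≥0∞} (hu : Measurable u) (hu1 : ∀ x, u x ≤ 1) :
    ∫⁻ x, u x ∂μ = ∫⁻ r in Ioo (0 : ℝ) 1, μ {x | ENNReal.ofReal r < u x} := by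
  have hu_top (x) : u x ≠ ∞ := ((hu1 x).trans_lt ENNReal.one_lt_top).ne
  have hempty {r : ℝ} (hr : r ∈ Ici (1 : ℝ)) : μ {x | ENNReal.ofReal r < u x} = 0 := by
    have hr1 : 1 ≤ ENNReal.ofReal r := ENNReal.one_le_ofReal.2 hr
    simp [fun x => not_lt.2 ((hu1 x).trans hr1)]
  calc ∫⁻ x, u x ∂μ = ∫⁻ x, ENNReal.ofReal (u x).toReal ∂μ := by
        simp only [ENNReal.ofReal_toReal (hu_top _)]
    _ = ∫⁻ r in Ioi (0 : ℝ), μ {x | r < (u x).toReal} :=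
        lintegral_eq_lintegral_meas_lt μ (.of_forall fun _ => ENNReal.toReal_nonneg)
          hu.ennreal_toReal.aemeasurable
    _ = ∫⁻ r in Ioi (0 : ℝ), μ {x | ENNReal.ofReal r < u x} :=
        setLIntegral_congr_fun measurableSet_Ioi fun r hr => by
          simp only [ENNReal.ofReal_lt_iff_lt_toReal (le_of_lt hr) (hu_top _)]
    _ = ∫⁻ r in Ioo (0 : ℝ) 1, μ {x | ENNReal.ofReal r < u x} := by
        rw [← Ioo_union_Ici_eq_Ioi zero_lt_one, lintegral_union measurableSet_Ici
          (disjoint_left.2 fun r hr hr' => hr.2.not_ge hr'),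
          setLIntegral_congr_fun measurableSet_Ici fun r hr => hempty hr, lintegral_zero,
          add_zero]

theorem ofReal_mul_lintegral_add_le_of_min_le {t s : ℝ} (ht : 0 < t) (hs : 0 < s)
    {u v w : ℝ → ℝ≥0∞} (hu : Measurable u) (hv : Measurable v) (hw : Measurable w)
    (hu1 : ⨆ x, u x = 1) (hv1 : ⨆ x, v x = 1)
    (h : ∀ x y, min (u x) (v y) ≤ w (t * x + s * y)) :
    ENNReal.ofReal t * (∫⁻ x, u x) + ENNReal.ofReal s * (∫⁻ x, v x) ≤ ∫⁻ x, w x := by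
  refine le_trans ?_ (lintegral_mono fun x => min_le_left (w x) 1)
  rw [lintegral_eq_setLIntegral_Ioo_meas_lt volume hu fun x => hu1 ▸ le_iSup u x,
    lintegral_eq_setLIntegral_Ioo_meas_lt volume hv fun x => hv1 ▸ le_iSup v x,
    lintegral_eq_setLIntegral_Ioo_meas_lt volume (hw.min measurable_const)
      fun x => min_le_right _ _,
    ← lintegral_const_mul' _ _ ENNReal.ofReal_ne_top,
    ← lintegral_const_mul' _ _ ENNReal.ofReal_ne_top]
  refine (le_lintegral_add _ _).trans (setLIntegral_mono' measurableSet_Ioo fun r hr => ?_)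
  have hr1 : ENNReal.ofReal r < 1 := ENNReal.ofReal_lt_one.2 hr.2
  obtain ⟨x₀, hx₀⟩ := lt_iSup_iff.1 (hu1.symm ▸ hr1)
  obtain ⟨y₀, hy₀⟩ := lt_iSup_iff.1 (hv1.symm ▸ hr1)
  refine (ofReal_mul_volume_add_le_volume_smul_add_smul ht hs (measurableSet_lt measurable_const hu)
    (measurableSet_lt measurable_const hv) ⟨x₀, hx₀⟩ ⟨y₀, hy₀⟩).trans (measure_mono ?_)
  rintro _ ⟨_, ⟨x, hx, rfl⟩, _, ⟨y, hy, rfl⟩, rfl⟩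
  exact lt_min ((lt_min hx hy).trans_le (h x y)) hr1

section Weights

variable {t s : ℝ}

theorem ennreal_rpow_mul_rpow_le_ofReal_mul_add (ht : 0 < t) (hs : 0 < s) (hts : t + s = 1)
    (a b : ℝ≥0∞) : a ^ t * b ^ s ≤ ENNReal.ofReal t * a + ENNReal.ofReal s * b := by
  induction a with
  | top => simp [ENNReal.mul_top, ht]
  | coe a =>
    induction b with
    | top => simp [ENNReal.mul_top, hs]
    | coe b =>
      rw [ENNReal.ofReal_eq_coe_nnreal ht.le, ENNReal.ofReal_eq_coe_nnreal hs.le,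
        ← ENNReal.coe_rpow_of_nonneg _ ht.le, ← ENNReal.coe_rpow_of_nonneg _ hs.le]
      exact_mod_cast NNReal.geom_mean_le_arith_mean2_weighted ⟨t, ht.le⟩ ⟨s, hs.le⟩ a b
        (NNReal.eq hts)

theorem ennreal_rpow_mul_rpow_self (ht : 0 ≤ t) (hs : 0 ≤ s) (hts : t + s = 1) (a : ℝ≥0∞) :
    a ^ t * a ^ s = a := by
  rw [← ENNReal.rpow_add_of_nonneg _ _ ht hs, hts, ENNReal.rpow_one]

theorem ennreal_min_le_rpow_mul_rpow (ht : 0 ≤ t) (hs : 0 ≤ s) (hts : t + s = 1) (a b : ℝ≥0∞) :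
    min a b ≤ a ^ t * b ^ s :=
  calc min a b = min a b ^ t * min a b ^ s := (ennreal_rpow_mul_rpow_self ht hs hts _).symm
    _ ≤ a ^ t * b ^ s := by gcongr <;> simp only [min_le_left, min_le_right]

theorem prekopa_leindler_real_of_iSup_ne_top (ht : 0 < t) (hs : 0 < s) (hts : t + s = 1)
    {u v w : ℝ → ℝ≥0∞} (hu : Measurable u) (hv : Measurable v) (hw : Measurable w)
    (hu_top : ⨆ x, u x ≠ ∞) (hv_top : ⨆ x, v x ≠ ∞)
    (h : ∀ x y, u x ^ t * v y ^ s ≤ w (t * x + s * y)) :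
    (∫⁻ x, u x) ^ t * (∫⁻ x, v x) ^ s ≤ ∫⁻ x, w x := by
  set a := ⨆ x, u x
  set b := ⨆ x, v x
  rcases eq_or_ne a 0 with ha | ha
  · simp [ENNReal.iSup_eq_zero.1 ha, ht]
  rcases eq_or_ne b 0 with hb | hb
  · simp [ENNReal.iSup_eq_zero.1 hb, hs]
  set c := a ^ t * b ^ s
  have hc : c ≠ 0 := by simp [c, ha, hb, hu_top, hv_top]
  have hc_top : c ≠ ∞ := by simp [c, ENNReal.mul_eq_top, ha, hb, hu_top, hv_top]
  have rpow_scale (p q : ℝ≥0∞) : (a⁻¹ * p) ^ t * (b⁻¹ * q) ^ s = c⁻¹ * (p ^ t * q ^ s) := by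
    rw [ENNReal.mul_rpow_of_nonneg _ _ ht.le, ENNReal.mul_rpow_of_nonneg _ _ hs.le,
      ENNReal.inv_rpow, ENNReal.inv_rpow, mul_mul_mul_comm, ENNReal.mul_inv] <;>
    simp [ha, hb, hu_top, hv_top]
  have hscaled := ofReal_mul_lintegral_add_le_of_min_le ht hs
    (u := fun x => a⁻¹ * u x) (v := fun x => b⁻¹ * v x) (w := fun x => c⁻¹ * w x)
    (hu.const_mul _) (hv.const_mul _) (hw.const_mul _)
    (by rw [← ENNReal.mul_iSup]; exact ENNReal.inv_mul_cancel ha hu_top)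
    (by rw [← ENNReal.mul_iSup]; exact ENNReal.inv_mul_cancel hb hv_top)
    fun x y => (ennreal_min_le_rpow_mul_rpow ht.le hs.le hts _ _).trans (by
      rw [rpow_scale]
      gcongr
      exact h x y)
  rw [lintegral_const_mul _ hu, lintegral_const_mul _ hv, lintegral_const_mul _ hw] at hscaled
  refine (ENNReal.mul_le_mul_iff_right (ENNReal.inv_ne_zero.2 hc_top)
    (ENNReal.inv_ne_top.2 hc)).1 ?_
  rw [← rpow_scale]
  exact (ennreal_rpow_mul_rpow_le_ofReal_mul_add ht hs hts _ _).trans hscaled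

theorem lintegral_eq_iSup_lintegral_min_nat {α : Type*} [MeasurableSpace α] (μ : Measure α)
    {u : α → ℝ≥0∞} (hu : Measurable u) : ∫⁻ x, u x ∂μ = ⨆ k : ℕ, ∫⁻ x, min (u x) k ∂μ := by
  rw [← lintegral_iSup (fun k => hu.min measurable_const)]
  · simp only [← inf_iSup_eq, ENNReal.iSup_natCast, inf_top_eq]
  · exact fun i j hij x => min_le_min_left _ (Nat.cast_le.2 hij)

/-- The Prékopa-Leindler inequality with weights `t` and `s`, as a property of the reference
measure `μ`; it holds for every Haar measure on a finite-dimensional real space. -/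
def SatisfiesPrekopaLeindler {E : Type*} [Add E] [SMul ℝ E] [MeasurableSpace E] (t s : ℝ)
    (μ : Measure E) : Prop :=
  ∀ ⦃u v w : E → ℝ≥0∞⦄, Measurable u → Measurable v → Measurable w →
    (∀ x y, u x ^ t * v y ^ s ≤ w (t • x + s • y)) →
      (∫⁻ x, u x ∂μ) ^ t * (∫⁻ x, v x ∂μ) ^ s ≤ ∫⁻ x, w x ∂μ

theorem satisfiesPrekopaLeindler_volume_real (ht : 0 < t) (hs : 0 < s) (hts : t + s = 1) :
    SatisfiesPrekopaLeindler t s (volume : Measure ℝ) := by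
  intro u v w hu hv hw h
  have rpow_lintegral {f : ℝ → ℝ≥0∞} (hf : Measurable f) {r : ℝ} (hr : 0 < r) :
      (∫⁻ x, f x) ^ r = ⨆ k : ℕ, (∫⁻ x, min (f x) k) ^ r := by
    rw [lintegral_eq_iSup_lintegral_min_nat _ hf]
    exact (ENNReal.orderIsoRpow r hr).map_iSup _
  have iSup_min_ne_top (f : ℝ → ℝ≥0∞) (k : ℕ) : ⨆ x, min (f x) k ≠ ∞ :=
    ((iSup_le fun x => min_le_right _ _).trans_lt (ENNReal.natCast_lt_top k)).ne
  rw [rpow_lintegral hu ht, rpow_lintegral hv hs]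
  simp only [ENNReal.iSup_mul, ENNReal.mul_iSup]
  refine iSup_le fun j => iSup_le fun i => prekopa_leindler_real_of_iSup_ne_top ht hs hts
    (hu.min measurable_const) (hv.min measurable_const) hw (iSup_min_ne_top u i)
    (iSup_min_ne_top v j) fun x y => le_trans ?_ (h x y)
  gcongr <;> exact min_le_left _ _

theorem satisfiesPrekopaLeindler_of_subsingleton {E : Type*} [AddZeroClass E] [SMul ℝ E]
    [Subsingleton E] [MeasurableSpace E] (ht : 0 ≤ t) (hs : 0 ≤ s) (hts : t + s = 1)
    (μ : Measure E) : SatisfiesPrekopaLeindler t s μ := by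
  intro u v w _ _ _ h
  have : Unique E := ⟨⟨0⟩, fun x => Subsingleton.elim x 0⟩
  rw [lintegral_unique, lintegral_unique, lintegral_unique, ENNReal.mul_rpow_of_nonneg _ _ ht,
    ENNReal.mul_rpow_of_nonneg _ _ hs, mul_mul_mul_comm, ennreal_rpow_mul_rpow_self ht hs hts]
  gcongr
  simpa only [Subsingleton.elim _ (default : E)] using h default default

namespace SatisfiesPrekopaLeindler

variable {E F : Type*} [MeasurableSpace E] [MeasurableSpace F]

theorem prod [Add E] [SMul ℝ E] [Add F] [SMul ℝ F] {μ : Measure E} {ν : Measure F} [SFinite ν]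
    (hμ : SatisfiesPrekopaLeindler t s μ) (hν : SatisfiesPrekopaLeindler t s ν) :
    SatisfiesPrekopaLeindler t s (μ.prod ν) := by
  intro u v w hu hv hw h
  rw [lintegral_prod _ hu.aemeasurable, lintegral_prod _ hv.aemeasurable,
    lintegral_prod _ hw.aemeasurable]
  refine hμ hu.lintegral_prod_right' hv.lintegral_prod_right' hw.lintegral_prod_right'
    fun x₁ y₁ => ?_
  exact hν (hu.comp measurable_prodMk_left) (hv.comp measurable_prodMk_left)
    (hw.comp measurable_prodMk_left) fun x₂ y₂ => h (x₁, x₂) (y₁, y₂)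

theorem smul_measure [Add E] [SMul ℝ E] {μ : Measure E} (hμ : SatisfiesPrekopaLeindler t s μ)
    (ht : 0 ≤ t) (hs : 0 ≤ s) (hts : t + s = 1) (c : ℝ≥0∞) :
    SatisfiesPrekopaLeindler t s (c • μ) := by
  intro u v w hu hv hw h
  rw [lintegral_smul_measure, lintegral_smul_measure, lintegral_smul_measure, smul_eq_mul,
    smul_eq_mul, smul_eq_mul, ENNReal.mul_rpow_of_nonneg _ _ ht, ENNReal.mul_rpow_of_nonneg _ _ hs,
    mul_mul_mul_comm, ennreal_rpow_mul_rpow_self ht hs hts]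
  exact mul_le_mul_right (hμ hu hv hw h) c

theorem map [AddCommMonoid E] [Module ℝ E] [AddCommMonoid F] [Module ℝ F] {μ : Measure E}
    (hμ : SatisfiesPrekopaLeindler t s μ) (L : E →ₗ[ℝ] F) (hL : Measurable L) :
    SatisfiesPrekopaLeindler t s (μ.map L) := by
  intro u v w hu hv hw h
  rw [lintegral_map hu hL, lintegral_map hv hL, lintegral_map hw hL]
  exact hμ (hu.comp hL) (hv.comp hL) (hw.comp hL) fun x y => by
    simpa only [map_add, map_smul] using! h (L x) (L y)

variable [NormedAddCommGroup E] [NormedSpace ℝ E] [BorelSpace E] [NormedAddCommGroup F]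
  [NormedSpace ℝ F] [FiniteDimensional ℝ F] [BorelSpace F]

theorem of_continuousLinearEquiv {μ : Measure E} [μ.IsAddHaarMeasure]
    (hμ : SatisfiesPrekopaLeindler t s μ) (ht : 0 ≤ t) (hs : 0 ≤ s) (hts : t + s = 1)
    (e : E ≃L[ℝ] F) (ν : Measure F) [ν.IsAddHaarMeasure] : SatisfiesPrekopaLeindler t s ν := by
  rw [Measure.isAddLeftInvariant_eq_smul ν (μ.map e)]
  exact (hμ.map e.toLinearEquiv.toLinearMap e.continuous.measurable).smul_measure ht hs hts _

end SatisfiesPrekopaLeindler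

theorem satisfiesPrekopaLeindler_volume_pi (ht : 0 < t) (hs : 0 < s) (hts : t + s = 1) (n : ℕ) :
    SatisfiesPrekopaLeindler t s (volume : Measure (Fin n → ℝ)) := by
  induction n with
  | zero => exact satisfiesPrekopaLeindler_of_subsingleton ht.le hs.le hts _
  | succ n ih =>
    exact ((satisfiesPrekopaLeindler_volume_real ht hs hts).prod ih).of_continuousLinearEquiv
      ht.le hs.le hts (ContinuousLinearEquiv.ofFinrankEq (by simp [add_comm])) _

theorem satisfiesPrekopaLeindler_of_isAddHaarMeasure {E : Type*} [NormedAddCommGroup E]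
    [NormedSpace ℝ E] [FiniteDimensional ℝ E] [MeasurableSpace E] [BorelSpace E] (ht : 0 < t)
    (hs : 0 < s) (hts : t + s = 1) (μ : Measure E) [μ.IsAddHaarMeasure] :
    SatisfiesPrekopaLeindler t s μ :=
  (satisfiesPrekopaLeindler_volume_pi ht hs hts (Module.finrank ℝ E)).of_continuousLinearEquiv
    ht.le hs.le hts (ContinuousLinearEquiv.ofFinrankEq (by simp)) μ

end Weights

end PrekopaLeindler

section StrongConvexity

variable {E : Type*} [NormedAddCommGroup E] [NormedSpace ℝ E] {ψ : E → ℝ} {ρ : ℝ}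

theorem convexOn_univ_of_hasDerivAt_of_hasDerivAt_nonneg {f f' f'' : ℝ → ℝ}
    (hf : ∀ r, HasDerivAt f (f' r) r) (hf' : ∀ r, HasDerivAt f' (f'' r) r)
    (hf'' : ∀ r, 0 ≤ f'' r) : ConvexOn ℝ Set.univ f := by
  obtain rfl : deriv f = f' := funext fun r => (hf r).deriv
  exact convexOn_univ_of_deriv2_nonneg (fun r => (hf r).differentiableAt)
    (fun r => (hf' r).differentiableAt) fun r => (hf'' r).trans_eq (hf' r).deriv.symm

theorem hasDerivAt_comp_add_smul {F : Type*} [NormedAddCommGroup F] [NormedSpace ℝ F] {f : E → F}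
    (hf : Differentiable ℝ f) (y v : E) (r : ℝ) :
    HasDerivAt (fun r : ℝ => f (y + r • v)) (fderiv ℝ f (y + r • v) v) r :=
  (hf _).hasFDerivAt.comp_hasDerivAt r
    (by simpa using ((hasDerivAt_id r).smul_const v).const_add y)

theorem convexOn_univ_comp_add_smul_sub_sq (hψ : ContDiff ℝ 2 ψ)
    (h : ∀ x v : E, ρ * ‖v‖ ^ 2 ≤ fderiv ℝ (fderiv ℝ ψ) x v v) (y v : E) :
    ConvexOn ℝ Set.univ fun r : ℝ => ψ (y + r • v) - ρ / 2 * ‖v‖ ^ 2 * r ^ 2 := by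
  have hψ' : Differentiable ℝ (fderiv ℝ ψ) :=
    (hψ.fderiv_right (m := 1) (by norm_num)).differentiable one_ne_zero
  refine convexOn_univ_of_hasDerivAt_of_hasDerivAt_nonneg
    (f' := fun r => fderiv ℝ ψ (y + r • v) v - ρ * ‖v‖ ^ 2 * r)
    (f'' := fun r => fderiv ℝ (fderiv ℝ ψ) (y + r • v) v v - ρ * ‖v‖ ^ 2)
    (fun r => ?_) (fun r => ?_) fun r => sub_nonneg.2 (h _ _)
  · refine ((hasDerivAt_comp_add_smul (hψ.differentiable two_ne_zero) y v r).sub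
      ((hasDerivAt_pow 2 r).const_mul (ρ / 2 * ‖v‖ ^ 2))).congr_deriv ?_
    push_cast
    ring
  · refine (((hasDerivAt_comp_add_smul hψ' y v r).clm_apply (hasDerivAt_const r v)).sub
      ((hasDerivAt_id r).const_mul (ρ * ‖v‖ ^ 2))).congr_deriv ?_
    simp only [map_zero, add_zero, mul_one]

theorem strongConvexOn_univ_of_le_fderiv_fderiv (hψ : ContDiff ℝ 2 ψ)
    (h : ∀ x v : E, ρ * ‖v‖ ^ 2 ≤ fderiv ℝ (fderiv ℝ ψ) x v v) :
    StrongConvexOn Set.univ ρ ψ := by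
  refine ⟨convex_univ, fun x _ y _ a b ha hb hab => ?_⟩
  have hline := (convexOn_univ_comp_add_smul_sub_sq hψ h y (x - y)).2 (Set.mem_univ 1)
    (Set.mem_univ 0) ha hb hab
  obtain rfl : b = 1 - a := by linarith
  have hpoint : y + a • (x - y) = a • x + (1 - a) • y := by module
  simp only [smul_eq_mul, mul_one, mul_zero, add_zero, one_smul, zero_smul, hpoint,
    add_sub_cancel] at hline ⊢
  linarith

theorem continuous_of_strongConvexOn_univ [FiniteDimensional ℝ E] (hρ : 0 ≤ ρ)
    (hψ : StrongConvexOn Set.univ ρ ψ) : Continuous ψ :=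
  (strongConvexOn_zero.1 (hψ.mono hρ)).locallyLipschitz.continuous

theorem sum_sum_hess_mul_mul (n : ℕ) (ψ : EuclideanSpace ℝ (Fin n) → ℝ)
    (x Y : EuclideanSpace ℝ (Fin n)) :
    ∑ i : Fin n, ∑ j : Fin n, hess n ψ x i j * Y i * Y j = fderiv ℝ (fderiv ℝ ψ) x Y Y := by
  have hY : Y = ∑ i, Y i • EuclideanSpace.single i (1 : ℝ) := by
    simpa using ((EuclideanSpace.basisFun (Fin n) ℝ).sum_repr Y).symm
  conv_rhs => rw [hY]
  simp only [map_sum, map_smul, FunLike.coe_sum, FunLike.coe_smul, Finset.sum_apply,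
    Pi.smul_apply, smul_eq_mul, hess, iteratedFDeriv_two_apply, Matrix.cons_val_zero,
    Matrix.cons_val_one, Finset.mul_sum]
  rw [Finset.sum_comm]
  exact Finset.sum_congr rfl fun i _ => Finset.sum_congr rfl fun j _ => by ring

theorem strongConvexOn_univ_of_le_hess {n : ℕ} {ψ : EuclideanSpace ℝ (Fin n) → ℝ}
    (hψ : ContDiff ℝ 2 ψ)
    (h : ∀ x Y : EuclideanSpace ℝ (Fin n),
      ρ * ‖Y‖ ^ 2 ≤ ∑ i : Fin n, ∑ j : Fin n, hess n ψ x i j * Y i * Y j) :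
    StrongConvexOn Set.univ ρ ψ :=
  strongConvexOn_univ_of_le_fderiv_fderiv hψ fun x Y =>
    (h x Y).trans_eq (sum_sum_hess_mul_mul n ψ x Y)

end StrongConvexity

section StronglyLogConcave

open scoped ENNReal

variable {E : Type*} [NormedAddCommGroup E] [NormedSpace ℝ E] {ψ : E → ℝ} {ρ t s : ℝ}

theorem rpow_mul_rpow_mul_exp_le_of_strongConvexOn (hψ : StrongConvexOn Set.univ ρ ψ) (ht : 0 < t)
    (hs : 0 ≤ s) (hts : t + s = 1) {Z : ℝ} (hZ : 0 ≤ Z) (x y : E) :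
    (exp (-ψ x) / Z) ^ t * (exp (-ψ y) / Z) ^ s * exp (t * s * (ρ / 2 * ‖x - y‖ ^ 2)) ≤
      exp (-ψ (t • x + s • y)) / Z := by
  rcases hZ.eq_or_lt with rfl | hZ
  · simp [ht.ne']
  have exp_div (r : ℝ) : exp r / Z = exp (r - log Z) := by rw [exp_sub, exp_log hZ]
  have hconv := hψ.2 (Set.mem_univ x) (Set.mem_univ y) ht.le hs hts
  rw [exp_div, exp_div, exp_div, ← exp_mul, ← exp_mul, ← exp_add, ← exp_add, exp_le_exp]
  obtain rfl : s = 1 - t := by linarith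
  simp only [smul_eq_mul] at hconv
  linarith

variable [MeasurableSpace E] {ν : Measure E}

theorem SatisfiesPrekopaLeindler.tilted_neg (hν : SatisfiesPrekopaLeindler t s ν) (ht : 0 < t)
    (hs : 0 ≤ s) (hts : t + s = 1) (hψ : StrongConvexOn Set.univ ρ ψ) (hψm : Measurable ψ)
    {u v w : E → ℝ≥0∞} (hu : Measurable u) (hv : Measurable v) (hw : Measurable w)
    (h : ∀ x y, u x ^ t * v y ^ s ≤
      ENNReal.ofReal (exp (t * s * (ρ / 2 * ‖x - y‖ ^ 2))) * w (t • x + s • y)) :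
    (∫⁻ x, u x ∂ν.tilted fun x => -ψ x) ^ t * (∫⁻ x, v x ∂ν.tilted fun x => -ψ x) ^ s ≤
      ∫⁻ x, w x ∂ν.tilted fun x => -ψ x := by
  simp only [lintegral_tilted]
  set Z := ∫ x, exp (-ψ x) ∂ν
  have hZ : 0 ≤ Z := integral_nonneg fun x => (exp_pos _).le
  refine hν (by fun_prop) (by fun_prop) (by fun_prop) fun x y => ?_
  have hdensity := ENNReal.ofReal_le_ofReal
    (rpow_mul_rpow_mul_exp_le_of_strongConvexOn hψ ht hs hts hZ x y)
  rw [ENNReal.ofReal_mul (by positivity), ENNReal.ofReal_mul (by positivity),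
    ← ENNReal.ofReal_rpow_of_nonneg (by positivity) ht.le,
    ← ENNReal.ofReal_rpow_of_nonneg (by positivity) hs] at hdensity
  rw [ENNReal.mul_rpow_of_nonneg _ _ ht.le, ENNReal.mul_rpow_of_nonneg _ _ hs, mul_mul_mul_comm]
  refine (mul_le_mul_right (h x y) _).trans ?_
  rw [← mul_assoc]
  exact mul_le_mul_left hdensity _

end StronglyLogConcave

section HopfLax

variable {E : Type*} [NormedAddCommGroup E] [NormedSpace ℝ E] [MeasurableSpace E] {ρ : ℝ}

/-- The dual, integrated form of the Prékopa-Leindler inequality for `ρ`-strongly log-concave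
measures. Its hypothesis says that `w` dominates the Hopf-Lax evolution
`z ↦ ⨆ h, g (z + h) - ρ * t / (2 * s) * ‖h‖ ^ 2`, without requiring the latter to be measurable. -/
def SatisfiesHopfLax (ρ : ℝ) (μ : Measure E) : Prop :=
  ∀ ⦃t s : ℝ⦄, 0 < t → 0 < s → t + s = 1 → ∀ ⦃g w : E → ℝ⦄, Measurable g → Measurable w →
    Integrable (fun x => exp (g x / t)) μ → Integrable (fun x => exp (w x)) μ →
      (∀ z h, g (z + h) ≤ w z + ρ * t / (2 * s) * ‖h‖ ^ 2) →
        (∫ x, exp (g x / t) ∂μ) ^ t ≤ ∫ x, exp (w x) ∂μ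

theorem satisfiesHopfLax_tilted_neg {ν : Measure E} {ψ : E → ℝ}
    (hν : ∀ t s : ℝ, 0 < t → 0 < s → t + s = 1 → SatisfiesPrekopaLeindler t s ν)
    [IsProbabilityMeasure (ν.tilted fun x => -ψ x)]
    (hψ : StrongConvexOn Set.univ ρ ψ) (hψm : Measurable ψ) :
    SatisfiesHopfLax ρ (ν.tilted fun x => -ψ x) := by
  intro t s ht hs hts g w hg hw hg_int hw_int hgw
  have hpl := (hν t s ht hs hts).tilted_neg ht hs.le hts hψ hψm
    (u := fun x => ENNReal.ofReal (exp (g x / t))) (v := fun _ => 1)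
    (w := fun x => ENNReal.ofReal (exp (w x))) (by fun_prop) (by fun_prop)
    (by fun_prop) fun x y => by
      have hx : t • x + s • y + s • (x - y) = x := by
        rw [← eq_sub_iff_add_eq'] at hts
        rw [hts]
        module
      have hgx := hgw (t • x + s • y) (s • (x - y))
      rw [hx, norm_smul, norm_of_nonneg hs.le] at hgx
      rw [ENNReal.one_rpow, mul_one, ENNReal.ofReal_rpow_of_pos (exp_pos _), ← exp_mul,
        div_mul_cancel₀ _ ht.ne', ← ENNReal.ofReal_mul (exp_pos _).le, ← exp_add]
      refine ENNReal.ofReal_le_ofReal (exp_le_exp.2 (hgx.trans_eq ?_))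
      field_simp
      ring
  rw [lintegral_one, measure_univ, ENNReal.one_rpow, mul_one,
    ← ofReal_integral_eq_lintegral_ofReal hg_int (.of_forall fun x => (exp_pos _).le),
    ← ofReal_integral_eq_lintegral_ofReal hw_int (.of_forall fun x => (exp_pos _).le),
    ENNReal.ofReal_rpow_of_nonneg (integral_nonneg fun x => (exp_pos _).le) ht.le] at hpl
  exact (ENNReal.ofReal_le_ofReal_iff (integral_nonneg fun x => (exp_pos _).le)).1 hpl

end HopfLax

section Entropy

variable {α : Type*} [MeasurableSpace α] {μ : Measure α} {f g : α → ℝ}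

/-- The entropy `Ent_μ(f)` of a nonnegative function `f`; the convention `log 0 = 0` makes the
integrand vanish where `f` does. -/
noncomputable def entropy (μ : Measure α) (f : α → ℝ) : ℝ :=
  ∫ x, f x * log (f x / ∫ y, f y ∂μ) ∂μ

theorem mul_log_div_eq_sub {b : ℝ} (hb : b ≠ 0) (a : ℝ) :
    a * log (a / b) = a * log a - a * log b := by
  rcases eq_or_ne a 0 with rfl | ha
  · simp
  · rw [log_div ha hb, mul_sub]

theorem entropy_eq_zero_of_integral_eq_zero (h : ∫ x, f x ∂μ = 0) : entropy μ f = 0 := by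
  simp [entropy, h]

theorem entropy_eq_integral_mul_log_sub (hf₀ : 0 ≤ f) (hf : Integrable f μ)
    (hf_log : Integrable (fun x => f x * log (f x)) μ) :
    entropy μ f = (∫ x, f x * log (f x) ∂μ) - (∫ x, f x ∂μ) * log (∫ x, f x ∂μ) := by
  rcases eq_or_ne (∫ x, f x ∂μ) 0 with hM | hM
  · rw [entropy_eq_zero_of_integral_eq_zero hM, hM, zero_mul, sub_zero]
    refine (integral_eq_zero_of_ae ?_).symm
    filter_upwards [(integral_eq_zero_iff_of_nonneg hf₀ hf).1 hM] with x hx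
    simp [hx]
  · simp only [entropy, mul_log_div_eq_sub hM]
    rw [integral_sub hf_log (hf.mul_const _), integral_mul_const]

theorem mul_le_mul_log_sub_add_exp {a : ℝ} (ha : 0 ≤ a) (b : ℝ) :
    a * b ≤ a * log a - a + exp b := by
  rcases ha.eq_or_lt with rfl | ha
  · simpa using (exp_pos b).le
  · have h := add_one_le_exp (b - log a)
    rw [exp_sub, exp_log ha, le_div_iff₀ ha] at h
    linarith

theorem integral_mul_le_entropy_add_mul_log_integral_exp [NeZero μ] {h : α → ℝ} (hf₀ : 0 ≤ f)
    (hf : Integrable f μ) (hf_log : Integrable (fun x => f x * log (f x)) μ)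
    (hh : Integrable (fun x => exp (h x)) μ) (hfh : Integrable (fun x => f x * h x) μ) :
    ∫ x, f x * h x ∂μ ≤ entropy μ f + (∫ x, f x ∂μ) * log (∫ x, exp (h x) ∂μ) := by
  rcases (integral_nonneg hf₀).eq_or_lt with hM | hM
  · rw [entropy_eq_zero_of_integral_eq_zero hM.symm, ← hM, zero_mul, add_zero]
    refine (integral_eq_zero_of_ae ?_).le
    filter_upwards [(integral_eq_zero_iff_of_nonneg hf₀ hf).1 hM.symm] with x hx
    simp [hx]
  have hK := integral_exp_pos hh
  set M := ∫ x, f x ∂μ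
  set K := ∫ x, exp (h x) ∂μ
  have hf_log_div : Integrable (fun x => f x * log (f x / M)) μ := by
    simpa only [mul_log_div_eq_sub hM.ne'] using! hf_log.sub (hf.mul_const (log M))
  have hf_sum : Integrable (fun x => f x * log (f x / M) + f x * (log K - 1)) μ :=
    hf_log_div.add (hf.mul_const _)
  have hpointwise (x) :
      f x * h x ≤ f x * log (f x / M) + f x * (log K - 1) + M / K * exp (h x) := by
    have hyoung := mul_le_mul_of_nonneg_left
      (mul_le_mul_log_sub_add_exp (div_nonneg (hf₀ x) hM.le) (h x - log K)) hM.le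
    rw [exp_sub, exp_log hK] at hyoung
    field_simp at hyoung ⊢
    linarith
  calc ∫ x, f x * h x ∂μ
      ≤ ∫ x, f x * log (f x / M) + f x * (log K - 1) + M / K * exp (h x) ∂μ :=
        integral_mono hfh (hf_sum.add (hh.const_mul _)) hpointwise
    _ = entropy μ f + M * log K := by
        rw [integral_add hf_sum (hh.const_mul _), integral_add hf_log_div
          (hf.mul_const _), integral_mul_const, integral_const_mul]
        change entropy μ f + M * (log K - 1) + M / K * K = _
        field_simp
        ring

theorem integral_exp_add_mul_entropy_le_rpow [NeZero μ] {t s : ℝ} (ht : 0 < t) (hts : t + s = 1)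
    (hg : Integrable (fun x => exp (g x)) μ) (hg_mul : Integrable (fun x => exp (g x) * g x) μ)
    (hg_div : Integrable (fun x => exp (g x / t)) μ) :
    (∫ x, exp (g x) ∂μ) + s * entropy μ (fun x => exp (g x)) ≤
      (∫ x, exp (g x / t) ∂μ) ^ t := by
  have hM := integral_exp_pos hg
  have hK := integral_exp_pos hg_div
  have hentropy := entropy_eq_integral_mul_log_sub (fun x => (exp_pos (g x)).le) hg
    (by simpa only [log_exp] using hg_mul)
  have hvar := integral_mul_le_entropy_add_mul_log_integral_exp (fun x => (exp_pos (g x)).le) hg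
    (by simpa only [log_exp] using hg_mul) hg_div
    (by simpa only [mul_div_assoc] using hg_mul.div_const t)
  simp only [log_exp] at hentropy
  simp only [← mul_div_assoc, integral_div] at hvar
  set M := ∫ x, exp (g x) ∂μ
  set K := ∫ x, exp (g x / t) ∂μ
  set Ent := entropy μ fun x => exp (g x)
  have hlog : log M + s * Ent / M ≤ log K * t := by
    obtain rfl : s = 1 - t := by linarith
    rw [div_le_iff₀ ht] at hvar
    field_simp
    linarith
  calc M + s * Ent = M * (s * Ent / M + 1) := by field_simp; ring
    _ ≤ M * exp (s * Ent / M) := by gcongr; exact add_one_le_exp _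
    _ = exp (log M + s * Ent / M) := by rw [exp_add, exp_log hM]
    _ ≤ K ^ t := by rw [rpow_def_of_pos hK]; exact exp_le_exp.2 hlog

end Entropy

section BoundedExponential

variable {α : Type*} [MeasurableSpace α] {μ : Measure α} [IsFiniteMeasure μ] {g G : α → ℝ}
  {a B L : ℝ}

theorem integrable_exp_of_forall_le (hg : Measurable g) (hB : ∀ x, g x ≤ B) :
    Integrable (fun x => exp (g x)) μ :=
  .of_mem_Icc 0 (exp B) hg.exp.aemeasurable
    (.of_forall fun x => ⟨(exp_pos _).le, exp_le_exp.2 (hB x)⟩)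

theorem exp_le_one_add_mul_exp_of_le {x y : ℝ} (hx : 0 ≤ x) (hxy : x ≤ y) :
    exp x ≤ 1 + x * exp y := by
  have h := mul_le_mul_of_nonneg_right (one_sub_le_exp_neg x) (exp_pos x).le
  rw [← exp_add, neg_add_cancel, exp_zero] at h
  linarith [mul_le_mul_of_nonneg_left (exp_le_exp.2 hxy) hx]

theorem integral_exp_add_mul_sq_le (hg : Measurable g) (hG : Measurable G)
    (hB : ∀ x, g x ≤ B) (ha : 0 ≤ a) (hL : ∀ x, G x ^ 2 ≤ L) :
    ∫ x, exp (g x + a * G x ^ 2) ∂μ ≤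
      (∫ x, exp (g x) ∂μ) + a * exp (a * L) * ∫ x, exp (g x) * G x ^ 2 ∂μ := by
  have hexp : Integrable (fun x => exp (g x)) μ := integrable_exp_of_forall_le hg hB
  have hexp_sq : Integrable (fun x => exp (g x) * G x ^ 2) μ :=
    hexp.mul_bdd (hG.pow_const 2).aestronglyMeasurable
      (.of_forall fun x => (norm_of_nonneg (sq_nonneg _)).trans_le (hL x))
  have haL (x) : a * G x ^ 2 ≤ a * L := by gcongr; exact hL x
  rw [← integral_const_mul, ← integral_add hexp (hexp_sq.const_mul _)]
  refine integral_mono (integrable_exp_of_forall_le (by fun_prop)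
    fun x => add_le_add (hB x) (haL x)) (hexp.add (hexp_sq.const_mul _)) fun x => ?_
  have h := mul_le_mul_of_nonneg_left
    (exp_le_one_add_mul_exp_of_le (by positivity) (haL x)) (exp_pos (g x)).le
  rw [← exp_add] at h
  simp only
  linarith

end BoundedExponential

section SlopeBound

open scoped Topology

variable {E : Type*} [NormedAddCommGroup E] {g G : E → ℝ} {δ B : ℝ}

/-- `G z` bounds the upward increments of `g` from `z`, relative to their length, at scales up to
`δ`. -/
def IsSlopeBound (g G : E → ℝ) (δ : ℝ) : Prop :=
  ∀ z h, ‖h‖ ≤ δ → g (z + h) ≤ g z + G z * ‖h‖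

/-- Small increments are handled by Young's inequality, large ones by the oscillation of `g`. -/
theorem IsSlopeBound.le_add_sq (hgG : IsSlopeBound g G δ) (hδ : 0 ≤ δ) (hB : ∀ x, |g x| ≤ B)
    {c : ℝ} (hc : 0 < c) (hcδ : 4 * B ≤ c * δ ^ 2) (z h : E) :
    g (z + h) ≤ g z + G z ^ 2 / (2 * c) + c / 2 * ‖h‖ ^ 2 := by
  rcases le_total ‖h‖ δ with hh | hh
  · have hyoung : G z * ‖h‖ ≤ G z ^ 2 / (2 * c) + c / 2 * ‖h‖ ^ 2 := by
      field_simp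
      linarith [sq_nonneg (G z - c * ‖h‖)]
    linarith [hgG z h hh]
  · have hsq : c * δ ^ 2 ≤ c * ‖h‖ ^ 2 := by gcongr
    have hG : 0 ≤ G z ^ 2 / (2 * c) := by positivity
    linarith [le_of_abs_le (hB (z + h)), neg_le_of_abs_le (hB z)]

variable [MeasurableSpace E] {μ : Measure E} [IsProbabilityMeasure μ] {ρ L : ℝ}

theorem SatisfiesHopfLax.entropy_exp_le_mul_of_isSlopeBound (hμ : SatisfiesHopfLax ρ μ)
    (hρ : 0 < ρ) (hg : Measurable g) (hG : Measurable G) (hgG : IsSlopeBound g G δ) (hδ : 0 ≤ δ)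
    (hB : ∀ x, |g x| ≤ B) (hL : ∀ x, G x ^ 2 ≤ L) {s : ℝ} (hs : 0 < s) (hs1 : s < 1)
    (hsδ : 4 * B ≤ ρ * (1 - s) / s * δ ^ 2) :
    entropy μ (fun x => exp (g x)) ≤ exp (s / (2 * ρ * (1 - s)) * L) / (1 - s) *
      (1 / (2 * ρ) * ∫ x, exp (g x) * G x ^ 2 ∂μ) := by
  have ht : 0 < 1 - s := sub_pos.2 hs1
  set a := s / (2 * ρ * (1 - s)) with ha_def
  have ha : 0 ≤ a := by positivity
  have hgB (x) : g x ≤ B := le_of_abs_le (hB x)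
  have haL (x) : a * G x ^ 2 ≤ a * L := by gcongr; exact hL x
  have hexp : Integrable (fun x => exp (g x)) μ := integrable_exp_of_forall_le hg hgB
  have hexp_div : Integrable (fun x => exp (g x / (1 - s))) μ :=
    integrable_exp_of_forall_le (by fun_prop) fun x => div_le_div_of_nonneg_right (hgB x) ht.le
  have hlower := integral_exp_add_mul_entropy_le_rpow ht (by ring) hexp
    (hexp.mul_bdd hg.aestronglyMeasurable (.of_forall hB)) hexp_div
  have hupper := hμ ht hs (by ring) hg (w := fun x => g x + a * G x ^ 2) (by fun_prop) hexp_div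
    (integrable_exp_of_forall_le (by fun_prop) fun x => add_le_add (hgB x) (haL x)) fun z h => by
      refine (hgG.le_add_sq hδ hB (by positivity) hsδ z h).trans_eq ?_
      rw [ha_def]
      field_simp
  have hchain := (hlower.trans hupper).trans (integral_exp_add_mul_sq_le hg hG hgB ha hL)
  have hs_entropy := (add_le_add_iff_left _).1 hchain
  refine le_of_mul_le_mul_left (hs_entropy.trans_eq ?_) hs
  rw [ha_def]
  field_simp

theorem SatisfiesHopfLax.entropy_exp_le_of_isSlopeBound (hμ : SatisfiesHopfLax ρ μ)
    (hρ : 0 < ρ) (hg : Measurable g) (hG : Measurable G) (hgG : IsSlopeBound g G δ) (hδ : 0 < δ)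
    (hB : ∀ x, |g x| ≤ B) (hL : ∀ x, G x ^ 2 ≤ L) :
    entropy μ (fun x => exp (g x)) ≤ 1 / (2 * ρ) * ∫ x, exp (g x) * G x ^ 2 ∂μ := by
  set I := 1 / (2 * ρ) * ∫ x, exp (g x) * G x ^ 2 ∂μ
  have hlim : Filter.Tendsto (fun s => exp (s / (2 * ρ * (1 - s)) * L) / (1 - s) * I)
      (𝓝[>] 0) (𝓝 I) := by
    have hcont : ContinuousAt (fun s => exp (s / (2 * ρ * (1 - s)) * L) / (1 - s) * I) 0 := by
      fun_prop (disch := simp [hρ.ne'])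
    simpa using hcont.tendsto.mono_left nhdsWithin_le_nhds
  have hsmall : ∀ᶠ s : ℝ in 𝓝[>] 0, 4 * B * s < ρ * (1 - s) * δ ^ 2 := by
    refine nhdsWithin_le_nhds (ContinuousAt.eventually_lt (by fun_prop) (by fun_prop) ?_)
    simpa using mul_pos hρ (pow_pos hδ 2)
  refine ge_of_tendsto hlim ?_
  filter_upwards [hsmall, Ioo_mem_nhdsGT zero_lt_one] with s hs_small hs
  refine hμ.entropy_exp_le_mul_of_isSlopeBound hρ hg hG hgG hδ.le hB hL hs.1 hs.2 ?_
  rw [div_mul_eq_mul_div, le_div_iff₀ hs.1]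
  exact hs_small.le

end SlopeBound

section FisherInformation

open scoped Topology

variable {E : Type*} [NormedAddCommGroup E] [NormedSpace ℝ E] {f g : E → ℝ} {ε : ℝ}

theorem exists_isSlopeBound_norm_fderiv_add (hg : Differentiable ℝ g)
    (hg' : UniformContinuous (fderiv ℝ g)) (hε : 0 < ε) :
    ∃ δ > 0, IsSlopeBound g (fun x => ‖fderiv ℝ g x‖ + ε) δ := by
  obtain ⟨δ, hδ, hclose⟩ := Metric.uniformContinuous_iff_le.1 hg' ε hε
  refine ⟨δ, hδ, fun z h hh => ?_⟩
  have hbound (x) (hx : x ∈ Metric.closedBall z δ) : ‖fderiv ℝ g x‖ ≤ ‖fderiv ℝ g z‖ + ε :=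
    (norm_le_norm_add_norm_sub' _ (fderiv ℝ g z)).trans
      (by simpa [dist_eq_norm] using hclose hx)
  have hmvt := (convex_closedBall z δ).norm_image_sub_le_of_norm_fderiv_le (fun x _ => hg x) hbound
    (Metric.mem_closedBall_self hδ.le) (y := z + h) (by simpa using hh)
  rw [add_sub_cancel_left] at hmvt
  linarith [le_of_abs_le hmvt]

variable [MeasurableSpace E] {μ : Measure E}

/-- The Fisher information of a positive function `f` relative to `μ`. -/
noncomputable def fisherInformation (μ : Measure E) (f : E → ℝ) : ℝ :=
  ∫ x, ‖fderiv ℝ f x‖ ^ 2 / f x ∂μ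

theorem integral_exp_mul_norm_fderiv_add_sq_le [BorelSpace E] [IsFiniteMeasure μ] {B L : ℝ}
    (hg : ContDiff ℝ 1 g) (hB : ∀ x, g x ≤ B) (hL : ∀ x, ‖fderiv ℝ g x‖ ≤ L) (hε : 0 ≤ ε) :
    ∫ x, exp (g x) * (‖fderiv ℝ g x‖ + ε) ^ 2 ∂μ ≤
      (∫ x, exp (g x) * ‖fderiv ℝ g x‖ ^ 2 ∂μ) + ε * (2 * L + ε) * ∫ x, exp (g x) ∂μ := by
  have hD : Measurable fun x => ‖fderiv ℝ g x‖ :=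
    (hg.continuous_fderiv one_ne_zero).norm.measurable
  have hexp : Integrable (fun x => exp (g x)) μ :=
    integrable_exp_of_forall_le hg.continuous.measurable hB
  have hexp_mul {h : E → ℝ} (hh : Measurable h) {M : ℝ} (hh₀ : ∀ x, 0 ≤ h x) (hM : ∀ x, h x ≤ M) :
      Integrable (fun x => exp (g x) * h x ^ 2) μ :=
    hexp.mul_bdd (c := M ^ 2) (hh.pow_const 2).aestronglyMeasurable (.of_forall fun x => by
      rw [norm_pow, norm_of_nonneg (hh₀ x)]
      exact pow_le_pow_left₀ (hh₀ x) (hM x) 2)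
  have hexp_sq := hexp_mul hD (fun x => norm_nonneg _) hL
  rw [← integral_const_mul, ← integral_add hexp_sq (hexp.const_mul _)]
  refine integral_mono (hexp_mul (hD.add_const ε) (fun x => by positivity)
    fun x => add_le_add_left (hL x) ε) (hexp_sq.add (hexp.const_mul _)) fun x => ?_
  have hsq : (‖fderiv ℝ g x‖ + ε) ^ 2 ≤ ‖fderiv ℝ g x‖ ^ 2 + ε * (2 * L + ε) := by
    linarith [mul_le_mul_of_nonneg_left (hL x) hε]
  simpa only [mul_add, mul_comm] using mul_le_mul_of_nonneg_left hsq (exp_pos (g x)).le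

namespace SatisfiesHopfLax

variable [BorelSpace E] [IsProbabilityMeasure μ] {ρ : ℝ}

theorem entropy_exp_le_integral_exp_mul (hμ : SatisfiesHopfLax ρ μ) (hρ : 0 < ρ) {B L : ℝ}
    (hg : ContDiff ℝ 1 g) (hg' : UniformContinuous (fderiv ℝ g)) (hB : ∀ x, |g x| ≤ B)
    (hL : ∀ x, ‖fderiv ℝ g x‖ ≤ L) :
    entropy μ (fun x => exp (g x)) ≤
      1 / (2 * ρ) * ∫ x, exp (g x) * ‖fderiv ℝ g x‖ ^ 2 ∂μ := by
  set I := ∫ x, exp (g x) * ‖fderiv ℝ g x‖ ^ 2 ∂μ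
  set M := ∫ x, exp (g x) ∂μ
  have hlim : Filter.Tendsto (fun ε => 1 / (2 * ρ) * (I + ε * (2 * L + ε) * M)) (𝓝[>] 0)
      (𝓝 (1 / (2 * ρ) * I)) := by
    have hcont : Continuous fun ε => 1 / (2 * ρ) * (I + ε * (2 * L + ε) * M) := by fun_prop
    simpa using (hcont.tendsto 0).mono_left nhdsWithin_le_nhds
  refine ge_of_tendsto hlim ?_
  filter_upwards [self_mem_nhdsWithin] with ε hε
  obtain ⟨δ, hδ, hslope⟩ :=
    exists_isSlopeBound_norm_fderiv_add (hg.differentiable one_ne_zero) hg' hε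
  have hDε : Measurable fun x => ‖fderiv ℝ g x‖ + ε :=
    ((hg.continuous_fderiv one_ne_zero).norm.add_const ε).measurable
  have hDε_le (x) : (‖fderiv ℝ g x‖ + ε) ^ 2 ≤ (L + ε) ^ 2 :=
    pow_le_pow_left₀ (add_nonneg (norm_nonneg _) (le_of_lt hε)) (add_le_add_left (hL x) ε) 2
  refine (hμ.entropy_exp_le_of_isSlopeBound hρ hg.continuous.measurable hDε hslope hδ hB
    hDε_le).trans ?_
  gcongr
  exact integral_exp_mul_norm_fderiv_add_sq_le hg (fun x => le_of_abs_le (hB x)) hL (le_of_lt hε)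

theorem entropy_le_of_hasCompactSupport_sub (hμ : SatisfiesHopfLax ρ μ) (hρ : 0 < ρ)
    (hf : ContDiff ℝ 1 f) (hpos : ∀ x, 0 < f x) (hsupp : HasCompactSupport fun x => f x - ε) :
    entropy μ f ≤ 1 / (2 * ρ) * fisherInformation μ f := by
  have hlog : ContDiff ℝ 1 fun x => log (f x) := hf.log fun x => (hpos x).ne'
  have hlog_supp : HasCompactSupport fun x => log (f x) - log ε := by
    simpa [Function.comp_def] using! hsupp.comp_left (g := fun r => log (r + ε) - log ε) (by simp)
  have hlog'_eq : fderiv ℝ (fun x => log (f x)) = fderiv ℝ fun x => log (f x) - log ε :=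
    funext fun x => (fderiv_sub_const _).symm
  have hlog'_supp : HasCompactSupport (fderiv ℝ fun x => log (f x)) := by
    rw [hlog'_eq]
    exact hlog_supp.fderiv ℝ
  have hlog'_cont := hlog.continuous_fderiv one_ne_zero
  obtain ⟨B, hB⟩ := hlog_supp.exists_bound_of_continuous (hlog.continuous.sub continuous_const)
  obtain ⟨L, hL⟩ := hlog'_supp.exists_bound_of_continuous hlog'_cont
  have hbound (x) : |log (f x)| ≤ B + |log ε| := by
    simpa using (abs_add_le (log (f x) - log ε) (log ε)).trans (add_le_add_left (hB x) _)
  have hexp_mul (x) : f x * ‖fderiv ℝ (fun x => log (f x)) x‖ ^ 2 = ‖fderiv ℝ f x‖ ^ 2 / f x := by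
    have hfx := (hpos x).ne'
    rw [fderiv.log (hf.differentiable one_ne_zero x) hfx, norm_smul, norm_inv,
      norm_of_nonneg (hpos x).le]
    field_simp
  have hentropy := hμ.entropy_exp_le_integral_exp_mul hρ hlog
    (hlog'_supp.uniformContinuous_of_continuous hlog'_cont) hbound hL
  simpa only [exp_log (hpos _), hexp_mul] using! hentropy

end SatisfiesHopfLax

end FisherInformation

section Truncation

open scoped Topology

variable {E : Type*} [NormedAddCommGroup E] [NormedSpace ℝ E]

theorem exists_contDiff_cutoff [FiniteDimensional ℝ E] (n : ℕ∞) (R : ℝ) {a : ℝ} (ha : 0 < a) :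
    ∃ χ : E → ℝ, ContDiff ℝ n χ ∧ HasCompactSupport χ ∧ (∀ x, χ x ∈ Set.Icc 0 1) ∧
      (∀ x, ‖x‖ ≤ R → χ x = 1) ∧ ∀ x, ‖fderiv ℝ χ x‖ ≤ a := by
  let b : ContDiffBump (0 : E) := ⟨1, 2, one_pos, one_lt_two⟩
  obtain ⟨C, hC⟩ := (b.contDiff (n := 1)).lipschitzWith_of_hasCompactSupport b.hasCompactSupport
    one_ne_zero
  obtain ⟨r, hr, hRr, hCr⟩ : ∃ r > 0, R ≤ r ∧ C ≤ a * r :=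
    ⟨max 1 (max R (C / a)), by positivity, by simp, by
      rw [← div_le_iff₀' ha]; exact (le_max_right _ _).trans (le_max_right _ _)⟩
  refine ⟨fun x => b (r⁻¹ • x), b.contDiff.comp (contDiff_const_smul _),
    b.hasCompactSupport.comp_smul (inv_ne_zero hr.ne'), fun x => ⟨b.nonneg, b.le_one⟩,
    fun x hx => b.one_of_mem_closedBall ?_, fun x => ?_⟩
  · rw [mem_closedBall_zero_iff, norm_smul, norm_inv, norm_of_nonneg hr.le, inv_mul_le_iff₀ hr]
    simpa [b] using hx.trans hRr
  · have hlip : LipschitzWith (C * ‖r⁻¹‖₊) fun x => b (r⁻¹ • x) := hC.comp (lipschitzWith_smul _)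
    refine (norm_fderiv_le_of_lipschitz ℝ hlip).trans ?_
    rwa [NNReal.coe_mul, coe_nnnorm, norm_inv, norm_of_nonneg hr.le, ← div_eq_mul_inv,
      div_le_iff₀ hr]

/-- The truncation of `f` by the cutoff function `χ`, shifted by `ε` to keep it away from `0`.
Squaring `χ` makes the Fisher information of the truncation controllable by that of `f`. -/
def truncation {α : Type*} (χ f : α → ℝ) (ε : ℝ) (x : α) : ℝ := χ x ^ 2 * f x + ε

theorem truncation_pos {α : Type*} {χ f : α → ℝ} {ε : ℝ} {x : α} (hf : 0 ≤ f x) (hε : 0 < ε) :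
    0 < truncation χ f ε x := by
  unfold truncation
  positivity

theorem truncation_le {α : Type*} {χ f : α → ℝ} {ε : ℝ} {x : α} (hf : 0 ≤ f x)
    (hχ : χ x ∈ Set.Icc 0 1) : truncation χ f ε x ≤ f x + ε :=
  add_le_add_left (mul_le_of_le_one_left hf (pow_le_one₀ hχ.1 hχ.2)) ε

theorem hasCompactSupport_truncation_sub {X : Type*} [TopologicalSpace X] {χ f : X → ℝ} {ε : ℝ}
    (hχ : HasCompactSupport χ) : HasCompactSupport fun x => truncation χ f ε x - ε := by
  have h : (fun x => truncation χ f ε x - ε) = χ * fun x => χ x * f x := by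
    ext x
    simp only [truncation, Pi.mul_apply]
    ring
  exact h ▸ hχ.mul_right

variable {f χ : E → ℝ} {ε a : ℝ} {x : E}

theorem contDiff_truncation {n : WithTop ℕ∞} (hχ : ContDiff ℝ n χ) (hf : ContDiff ℝ n f) :
    ContDiff ℝ n (truncation χ f ε) :=
  ((hχ.pow 2).mul hf).add contDiff_const

theorem norm_fderiv_truncation_le (hf : DifferentiableAt ℝ f x) (hχ : DifferentiableAt ℝ χ x)
    (hf₀ : 0 ≤ f x) (hχ₀₁ : χ x ∈ Set.Icc 0 1) (ha : ‖fderiv ℝ χ x‖ ≤ a) :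
    ‖fderiv ℝ (truncation χ f ε) x‖ ≤ χ x * (‖fderiv ℝ f x‖ + 2 * a * f x) := by
  obtain ⟨hχ₀, hχ₁⟩ := hχ₀₁
  have hderiv : fderiv ℝ (truncation χ f ε) x =
      χ x ^ 2 • fderiv ℝ f x + (2 * χ x * f x) • fderiv ℝ χ x := by
    refine (((hχ.hasFDerivAt.pow 2).mul hf.hasFDerivAt).add_const ε).fderiv.trans ?_
    ext v
    simp only [Nat.add_one_sub_one, pow_one, nsmul_eq_mul, Nat.cast_ofNat, add_apply, smul_apply,
      smul_eq_mul, add_right_inj]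
    ring
  calc ‖fderiv ℝ (truncation χ f ε) x‖
      ≤ χ x ^ 2 * ‖fderiv ℝ f x‖ + 2 * χ x * f x * ‖fderiv ℝ χ x‖ := by
        rw [hderiv]
        refine (norm_add_le _ _).trans_eq ?_
        rw [norm_smul, norm_smul, norm_of_nonneg (by positivity), norm_of_nonneg (by positivity)]
    _ ≤ χ x * ‖fderiv ℝ f x‖ + 2 * χ x * f x * a := by
        gcongr
        exact pow_le_of_le_one hχ₀ hχ₁ two_ne_zero
    _ = χ x * (‖fderiv ℝ f x‖ + 2 * a * f x) := by ring

theorem norm_fderiv_truncation_sq_div_le (hf : DifferentiableAt ℝ f x)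
    (hχ : DifferentiableAt ℝ χ x) (hpos : 0 < f x) (hε : 0 < ε) (hχ₀₁ : χ x ∈ Set.Icc 0 1)
    (ha : ‖fderiv ℝ χ x‖ ≤ a) :
    ‖fderiv ℝ (truncation χ f ε) x‖ ^ 2 / truncation χ f ε x ≤
      (1 + 2 * a) * (‖fderiv ℝ f x‖ ^ 2 / f x) + (2 * a + 4 * a ^ 2) * f x := by
  have ha₀ : 0 ≤ a := (norm_nonneg _).trans ha
  have hderiv := norm_fderiv_truncation_le (ε := ε) hf hχ hpos.le hχ₀₁ ha
  have htrunc := truncation_pos (χ := χ) hpos.le hε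
  set D := ‖fderiv ℝ f x‖
  calc ‖fderiv ℝ (truncation χ f ε) x‖ ^ 2 / truncation χ f ε x
      ≤ (χ x * (D + 2 * a * f x)) ^ 2 / truncation χ f ε x := by gcongr
    _ ≤ (D + 2 * a * f x) ^ 2 / f x := by
        rw [div_le_div_iff₀ htrunc hpos, truncation]
        linarith [mul_nonneg (sq_nonneg (D + 2 * a * f x)) hε.le]
    _ ≤ (1 + 2 * a) * (D ^ 2 / f x) + (2 * a + 4 * a ^ 2) * f x := by
        field_simp
        linarith [mul_nonneg ha₀ (sq_nonneg (D - f x))]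

variable [MeasurableSpace E] {μ : Measure E}

theorem fisherInformation_truncation_le (hf : Differentiable ℝ f) (hχ : Differentiable ℝ χ)
    (hpos : ∀ x, 0 < f x) (hf_int : Integrable f μ)
    (hf_fisher : Integrable (fun x => ‖fderiv ℝ f x‖ ^ 2 / f x) μ) (hε : 0 < ε)
    (hχ₀₁ : ∀ x, χ x ∈ Set.Icc 0 1) (ha : ∀ x, ‖fderiv ℝ χ x‖ ≤ a) :
    fisherInformation μ (truncation χ f ε) ≤
      (1 + 2 * a) * fisherInformation μ f + (2 * a + 4 * a ^ 2) * ∫ x, f x ∂μ := by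
  have hsum := (hf_fisher.const_mul (1 + 2 * a)).add (hf_int.const_mul (2 * a + 4 * a ^ 2))
  rw [fisherInformation, fisherInformation, ← integral_const_mul, ← integral_const_mul,
    ← integral_add (hf_fisher.const_mul _) (hf_int.const_mul _)]
  exact integral_mono_of_nonneg
    (.of_forall fun x => div_nonneg (sq_nonneg _) (truncation_pos (hpos x).le hε).le) hsum
    (.of_forall fun x =>
      norm_fderiv_truncation_sq_div_le (hf x) (hχ x) (hpos x) hε (hχ₀₁ x) (ha x))

theorem abs_mul_log_le {u b : ℝ} (hu : 0 < u) (hb : 0 < b) (hub : u ≤ b + 1) :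
    |u * log u| ≤ 3 + 2 * b + 2 * |b * log b| := by
  have hblog := le_abs_self (b * log b)
  have hblog₀ := abs_nonneg (b * log b)
  rcases le_total u 1 with hu₁ | hu₁
  · have := abs_log_mul_self_lt u hu hu₁
    rw [mul_comm] at this
    linarith
  have hlogu := log_nonneg hu₁
  rw [abs_of_nonneg (mul_nonneg hu.le hlogu)]
  rcases le_total b 1 with hb₁ | hb₁
  · have hlog_le : log u ≤ 1 := by linarith [log_le_sub_one_of_pos hu]
    linarith [mul_le_mul_of_nonneg_left hlog_le hu.le]
  · have hu_le : u ≤ 2 * b := by linarith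
    have hlog_le : log u ≤ 1 + log b := by
      have := log_le_log hu hu_le
      rw [log_mul two_ne_zero hb.ne'] at this
      linarith [log_two_lt_d9]
    linarith [mul_le_mul hu_le hlog_le hlogu (by positivity)]

theorem tendsto_entropy_of_le_add_one {α : Type*} [MeasurableSpace α] {μ : Measure α}
    [IsFiniteMeasure μ] {F : ℕ → α → ℝ} {f : α → ℝ} (hF : ∀ k, Measurable (F k))
    (hFpos : ∀ k x, 0 < F k x) (hFle : ∀ k x, F k x ≤ f x + 1) (hpos : ∀ x, 0 < f x)
    (hf : Integrable f μ) (hf_log : Integrable (fun x => f x * log (f x)) μ)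
    (hlim : ∀ x, Filter.Tendsto (F · x) Filter.atTop (𝓝 (f x))) :
    Filter.Tendsto (fun k => entropy μ (F k)) Filter.atTop (𝓝 (entropy μ f)) := by
  have hf_add := hf.add (integrable_const 1)
  have hlog_bound : Integrable (fun x => 3 + 2 * f x + 2 * |f x * log (f x)|) μ :=
    ((integrable_const 3).add (hf.const_mul 2)).add (hf_log.abs.const_mul 2)
  have hF_meas (k) := (hF k).aestronglyMeasurable (μ := μ)
  have hF_log_meas (k) : AEStronglyMeasurable (fun x => F k x * log (F k x)) μ :=
    ((hF k).mul (hF k).log).aestronglyMeasurable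
  have hF_le (k) : ∀ᵐ x ∂μ, ‖F k x‖ ≤ f x + 1 :=
    .of_forall fun x => by simpa only [norm_of_nonneg (hFpos k x).le] using hFle k x
  have hF_log_le (k) : ∀ᵐ x ∂μ, ‖F k x * log (F k x)‖ ≤ 3 + 2 * f x + 2 * |f x * log (f x)| :=
    .of_forall fun x => abs_mul_log_le (hFpos k x) (hpos x) (hFle k x)
  have hentropy (k) := entropy_eq_integral_mul_log_sub (fun x => (hFpos k x).le)
    (hf_add.mono' (hF_meas k) (hF_le k)) (hlog_bound.mono' (hF_log_meas k) (hF_log_le k))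
  simp only [hentropy, entropy_eq_integral_mul_log_sub (fun x => (hpos x).le) hf hf_log]
  have hlim_integral := tendsto_integral_of_dominated_convergence _ hF_meas hf_add hF_le
    (.of_forall hlim)
  have hlim_integral_log := tendsto_integral_of_dominated_convergence _ hF_log_meas hlog_bound
    hF_log_le (.of_forall fun x => (continuous_mul_log.tendsto _).comp (hlim x))
  exact hlim_integral_log.sub ((continuous_mul_log.tendsto _).comp hlim_integral)

theorem entropy_le_fisherInformation_of_forall_hasCompactSupport [FiniteDimensional ℝ E]
    [BorelSpace E] [IsFiniteMeasure μ] {C : ℝ} (hC : 0 ≤ C)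
    (hμ : ∀ (F : E → ℝ) (ε : ℝ), ContDiff ℝ 1 F → (∀ x, 0 < F x) →
      HasCompactSupport (fun x => F x - ε) → entropy μ F ≤ C * fisherInformation μ F)
    (hf : ContDiff ℝ 1 f) (hpos : ∀ x, 0 < f x) (hf_int : Integrable f μ)
    (hf_log : Integrable (fun x => f x * log (f x)) μ)
    (hf_fisher : Integrable (fun x => ‖fderiv ℝ f x‖ ^ 2 / f x) μ) :
    entropy μ f ≤ C * fisherInformation μ f := by
  set ε : ℕ → ℝ := fun k => 1 / (k + 1)
  have hε₀ (k) : 0 < ε k := Nat.one_div_pos_of_nat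
  have hε₁ (k) : ε k ≤ 1 := by simpa [ε] using Nat.one_div_le_one_div (α := ℝ) (Nat.zero_le k)
  have hε : Filter.Tendsto ε Filter.atTop (𝓝 0) := tendsto_one_div_add_atTop_nhds_zero_nat
  choose χ hχ hχ_supp hχ₀₁ hχ_eq hχ' using fun k : ℕ => exists_contDiff_cutoff (E := E) 1 k (hε₀ k)
  have hlim (x) : Filter.Tendsto (fun k => truncation (χ k) f (ε k) x) Filter.atTop (𝓝 (f x)) := by
    have hχ_lim : Filter.Tendsto (χ · x) Filter.atTop (𝓝 1) := by
      refine tendsto_const_nhds.congr' ?_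
      filter_upwards [Filter.eventually_ge_atTop ⌈‖x‖⌉₊] with k hk
      exact (hχ_eq k x (Nat.ceil_le.1 hk)).symm
    simpa using! ((hχ_lim.pow 2).mul_const (f x)).add hε
  have hentropy := tendsto_entropy_of_le_add_one
    (fun k => (contDiff_truncation (ε := ε k) (hχ k) hf).continuous.measurable)
    (fun k x => truncation_pos (hpos x).le (hε₀ k))
    (fun k x => (truncation_le (hpos x).le (hχ₀₁ k x)).trans (by gcongr; exact hε₁ k))
    hpos hf_int hf_log hlim
  have hfisher : Filter.Tendsto (fun k => C * ((1 + 2 * ε k) * fisherInformation μ f +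
      (2 * ε k + 4 * ε k ^ 2) * ∫ x, f x ∂μ)) Filter.atTop (𝓝 (C * fisherInformation μ f)) := by
    have hcont : Continuous fun e => C * ((1 + 2 * e) * fisherInformation μ f +
      (2 * e + 4 * e ^ 2) * ∫ x, f x ∂μ) := by fun_prop
    simpa using! (hcont.tendsto 0).comp hε
  refine le_of_tendsto_of_tendsto' hentropy hfisher fun k => ?_
  refine (hμ _ (ε k) (contDiff_truncation (hχ k) hf) (fun x => truncation_pos (hpos x).le (hε₀ k))
    (hasCompactSupport_truncation_sub (hχ_supp k))).trans ?_
  gcongr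
  exact fisherInformation_truncation_le (hf.differentiable one_ne_zero)
    ((hχ k).differentiable one_ne_zero) hpos hf_int hf_fisher (hε₀ k) (hχ₀₁ k) (hχ' k)

end Truncation

theorem bakry_emery_logSobolev_general {E : Type*} [NormedAddCommGroup E] [NormedSpace ℝ E]
    [FiniteDimensional ℝ E] [MeasurableSpace E] [BorelSpace E] {ν : Measure E}
    [ν.IsAddHaarMeasure] {ψ f : E → ℝ} {ρ : ℝ} (hρ : 0 < ρ) (hψ : StrongConvexOn Set.univ ρ ψ)
    (hint : Integrable (fun x => exp (-ψ x)) ν) (hf : ContDiff ℝ 1 f) (hpos : ∀ x, 0 < f x)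
    (hf_int : Integrable f (ν.tilted fun x => -ψ x))
    (hf_log : Integrable (fun x => f x * log (f x)) (ν.tilted fun x => -ψ x))
    (hf_fisher : Integrable (fun x => ‖fderiv ℝ f x‖ ^ 2 / f x) (ν.tilted fun x => -ψ x)) :
    entropy (ν.tilted fun x => -ψ x) f ≤
      1 / (2 * ρ) * fisherInformation (ν.tilted fun x => -ψ x) f := by
  have := isProbabilityMeasure_tilted hint
  have hHopfLax : SatisfiesHopfLax ρ (ν.tilted fun x => -ψ x) :=
    satisfiesHopfLax_tilted_neg
      (fun _ _ ht hs hts => satisfiesPrekopaLeindler_of_isAddHaarMeasure ht hs hts ν) hψ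
      (continuous_of_strongConvexOn_univ hρ.le hψ).measurable
  exact entropy_le_fisherInformation_of_forall_hasCompactSupport (by positivity)
    (fun _ _ hF hFpos hF_supp => hHopfLax.entropy_le_of_hasCompactSupport_sub hρ hF hFpos hF_supp)
    hf hpos hf_int hf_log hf_fisher

theorem bakry_emery_logSobolev (n : ℕ) (ψ : EuclideanSpace ℝ (Fin n) → ℝ) (ρ : ℝ)
    (hρ : 0 < ρ) (hψ : ContDiff ℝ 2 ψ)
    (hint : Integrable (fun x => Real.exp (-ψ x))
      (volume : Measure (EuclideanSpace ℝ (Fin n))))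
    (hconv : ∀ x Y : EuclideanSpace ℝ (Fin n),
      ρ * ‖Y‖ ^ 2 ≤ ∑ i : Fin n, ∑ j : Fin n, hess n ψ x i j * Y i * Y j)
    (μ : Measure (EuclideanSpace ℝ (Fin n)))
    (hμ : μ = (volume : Measure (EuclideanSpace ℝ (Fin n))).withDensity
      (fun x => ENNReal.ofReal
        (Real.exp (-ψ x) / ∫ y, Real.exp (-ψ y)
          ∂(volume : Measure (EuclideanSpace ℝ (Fin n))))))
    (f : EuclideanSpace ℝ (Fin n) → ℝ) (hf : ContDiff ℝ (⊤ : ℕ∞) f) (hpos : ∀ x, 0 < f x)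
    (hi1 : Integrable f μ)
    (hi2 : Integrable (fun x => f x * Real.log (f x)) μ)
    (hi3 : Integrable (fun x => ‖gradient f x‖ ^ 2 / f x) μ) :
    ∫ x, f x * Real.log (f x / ∫ y, f y ∂μ) ∂μ
      ≤ (1 / (2 * ρ)) * ∫ x, ‖gradient f x‖ ^ 2 / f x ∂μ := by
  subst hμ
  have hgrad (x) : ‖gradient f x‖ = ‖fderiv ℝ f x‖ := LinearIsometryEquiv.norm_map _ _
  simp only [hgrad] at hi3 ⊢
  exact bakry_emery_logSobolev_general hρ (strongConvexOn_univ_of_le_hess hψ hconv) hint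
    (hf.of_le (mod_cast le_top)) hpos hi1 hi2 hi3
end
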